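/- arXiv:1104.4356 — 2 statements merged into one kernel-verified Lean document; each statement's English description precedes it below -/
import Mathlib

section
/- Assume the Riemann Hypothesis. There exists an absolute constant C > 0 such that for all real r, x, c₁ with r > 1, x^{c₁} ≥ 2657, and 1/2 − ln r/(2·ln x) < c₁ ≤ 1/2, there exists ã ∈ [1/(4(1−c₁)²), 1/(4c₁²)] with |N^{MAX}_{r,c₁}(x) − ã·(4x/ln²x)·((1 − 2c₁)·ln x + x^{−(1−2c₁)} − 1)| ≤ C·c₁^{−1}·x^{1 − c₁/2}, where N^{MAX}_{r,c₁}(x) = #{(p,q) : p, q prime, x^{c₁} < p ≤ x^{1−c₁}, x^{c₁} < q ≤ x^{1−c₁}, and x/r < p·q ≤ x}; in particular the main term is independent of r. -/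
/-- Prime-pair count of the maximal `[c₁, 1−c₁]`-balanced notion with tolerance `r`:
ordered pairs of primes `(p,q)` with `x^{c₁} < p, q ≤ x^{1−c₁}` and `x/r < p·q ≤ x`. -/
noncomputable def NMAX (r c₁ x : ℝ) : ℕ :=
  Nat.card {pq : ℕ × ℕ // pq.1.Prime ∧ pq.2.Prime ∧
    x ^ c₁ < (pq.1 : ℝ) ∧ (pq.1 : ℝ) ≤ x ^ (1 - c₁) ∧
    x ^ c₁ < (pq.2 : ℝ) ∧ (pq.2 : ℝ) ≤ x ^ (1 - c₁) ∧
    x / r < (pq.1 : ℝ) * (pq.2 : ℝ) ∧ (pq.1 : ℝ) * (pq.2 : ℝ) ≤ x}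

/-!
Under the Riemann Hypothesis, or just a zero-free half-plane `re s > σ` with `σ < 2 / 3`,
`ϑ(t) = t + O(t ^ (2 / 3))`. The pairs in question are the prime points of the hyperbolic triangle
`p, q > x ^ c₁`, `p * q ≤ x`, because the lower hyperbola does not meet it. Weighting each pair by
`log p * log q` and summing by parts twice, the weighted count is the area of the triangle up to an
error which is either of the order of the claimed one or dominated by half of the area times
`1 - 2 * c₁`.

On the triangle the weights lie between `(c₁ * log x) ^ 2` and `log x ^ 2 / 4`, and the lower
bound improves to `c₁ * log x ^ 2 / 2` beyond the hyperbola `p * q = x ^ (c₁ + 1 / 2)`, below which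
lies at most half of the area. Both comparisons of the count with the area therefore have slack
proportional to `1 - 2 * c₁`, which absorbs the dominated part of the error.

The estimate for `ϑ` comes from the smoothed sum `∫ ψ`: its Mellin integral is moved to the line
`re s = σ'` with `σ < σ' < 2 / 3`, on which Borel–Carathéodory bounds `ζ' / ζ` by an arbitrarily
small power of `|s|`, and difference quotients with step `√t` undo the smoothing.
-/

section MellinTransform

open Complex MeasureTheory Set Filter Topology Asymptotics

variable {E : Type*} [NormedAddCommGroup E] [NormedSpace ℂ E] {a : ℝ}

lemma indicator_Ioi_cpow_smul_indicator_Ioi (ha : 0 ≤ a) (f : ℝ → E) (s : ℂ) :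
    ((Ioi 0).indicator fun t : ℝ ↦ (t : ℂ) ^ (s - 1) • (Ioi a).indicator f t) =
      (Ioi a).indicator fun t : ℝ ↦ (t : ℂ) ^ (s - 1) • f t := by
  ext t
  by_cases hat : a < t
  · simp [hat, ha.trans_lt hat]
  · simp [hat]

lemma mellin_indicator_Ioi (ha : 0 ≤ a) (f : ℝ → E) (s : ℂ) :
    mellin ((Ioi a).indicator f) s = ∫ t in Ioi a, (t : ℂ) ^ (s - 1) • f t := by
  rw [mellin, ← integral_indicator measurableSet_Ioi,
    indicator_Ioi_cpow_smul_indicator_Ioi ha, integral_indicator measurableSet_Ioi]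

lemma mellinConvergent_indicator_Ioi (ha : 0 ≤ a) (f : ℝ → E) (s : ℂ) :
    MellinConvergent ((Ioi a).indicator f) s ↔
      IntegrableOn (fun t : ℝ ↦ (t : ℂ) ^ (s - 1) • f t) (Ioi a) := by
  rw [MellinConvergent, ← integrable_indicator_iff measurableSet_Ioi,
    indicator_Ioi_cpow_smul_indicator_Ioi ha, integrable_indicator_iff measurableSet_Ioi]

lemma differentiableAt_mellin_indicator_Ioi [CompleteSpace E] (ha : 0 < a) {f : ℝ → E}
    (hf : LocallyIntegrable f) {b : ℝ} (hfb : f =O[atTop] fun t : ℝ ↦ t ^ (-b)) {s : ℂ}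
    (hs : s.re < b) : DifferentiableAt ℂ (mellin ((Ioi a).indicator f)) s := by
  have h_zero : (Ioi a).indicator f =ᶠ[𝓝[>] 0] 0 := by
    filter_upwards [nhdsWithin_le_nhds (eventually_lt_nhds ha)] with t hta
    simp [hta.le]
  have h_top : (Ioi a).indicator f =ᶠ[atTop] f := by
    filter_upwards [eventually_gt_atTop a] with t hat
    simp [hat]
  have hloc : LocallyIntegrable ((Ioi a).indicator f) := hf.indicator measurableSet_Ioi
  exact mellin_differentiableAt_of_isBigO_rpow (hloc.locallyIntegrableOn _)
    (h_top.trans_isBigO hfb) hs (h_zero.trans_isBigO (isBigO_zero _ _)) (sub_one_lt s.re)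

end MellinTransform

section ZetaGrowth

open Complex MeasureTheory Set Filter Topology Asymptotics

lemma norm_ofReal_fract_le_one (t : ℝ) : ‖((Int.fract t : ℝ) : ℂ)‖ ≤ 1 := by
  rw [norm_real, Real.norm_of_nonneg (Int.fract_nonneg t)]
  exact (Int.fract_lt_one t).le

lemma measurable_ofReal_fract : Measurable fun t : ℝ ↦ ((Int.fract t : ℝ) : ℂ) :=
  measurable_ofReal.comp measurable_fract

/-- The Mellin-type integral `∫₁^∞ {t} t^(-s-1) dt`, which continues `ζ` to `Re s > 0`. -/
noncomputable def fractIntegral (s : ℂ) : ℂ :=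
  mellin ((Ioi 1).indicator fun t : ℝ ↦ ((Int.fract t : ℝ) : ℂ)) (-s)

lemma fractIntegral_eq_integral (s : ℂ) :
    fractIntegral s = ∫ t in Ioi (1 : ℝ), (t : ℂ) ^ (-s - 1) * (Int.fract t : ℝ) :=
  mellin_indicator_Ioi zero_le_one _ _

lemma differentiableAt_fractIntegral {s : ℂ} (hs : 0 < s.re) :
    DifferentiableAt ℂ fractIntegral s := by
  have hloc : LocallyIntegrable fun t : ℝ ↦ ((Int.fract t : ℝ) : ℂ) :=
    (locallyIntegrable_const (1 : ℝ)).mono measurable_ofReal_fract.aestronglyMeasurable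
      (.of_forall fun t ↦ by simpa using norm_ofReal_fract_le_one t)
  have hbdd : (fun t : ℝ ↦ ((Int.fract t : ℝ) : ℂ)) =O[atTop] fun t : ℝ ↦ t ^ (-0 : ℝ) :=
    .of_bound 1 (.of_forall fun t ↦ by simpa using norm_ofReal_fract_le_one t)
  have hmellin := differentiableAt_mellin_indicator_Ioi one_pos hloc hbdd (s := -s) (by simpa)
  exact hmellin.comp s differentiableAt_id.neg

lemma integrableOn_cpow_mul_fract {s : ℂ} (hs : 0 < s.re) :
    IntegrableOn (fun t : ℝ ↦ (t : ℂ) ^ (-s - 1) * (Int.fract t : ℝ)) (Ioi 1) :=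
  (integrableOn_Ioi_cpow_of_lt (by rw [sub_re, neg_re, one_re]; linarith) one_pos).mul_bdd
    measurable_ofReal_fract.aestronglyMeasurable (.of_forall norm_ofReal_fract_le_one)

lemma norm_fractIntegral_le {s : ℂ} (hs : 0 < s.re) : ‖fractIntegral s‖ ≤ s.re⁻¹ := by
  have hpow : IntegrableOn (fun t : ℝ ↦ t ^ (-s.re - 1)) (Ioi 1) :=
    integrableOn_Ioi_rpow_of_lt (by linarith) one_pos
  have hle : ∀ t ∈ Ioi (1 : ℝ),
      ‖(t : ℂ) ^ (-s - 1) * (Int.fract t : ℝ)‖ ≤ t ^ (-s.re - 1) := fun t ht ↦ by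
    rw [norm_mul, norm_cpow_eq_rpow_re_of_pos (one_pos.trans ht)]
    exact mul_le_of_le_one_right (Real.rpow_nonneg (one_pos.trans ht).le _)
      (norm_ofReal_fract_le_one t)
  calc ‖fractIntegral s‖ ≤ ∫ t in Ioi (1 : ℝ), t ^ (-s.re - 1) := by
        rw [fractIntegral_eq_integral]
        exact norm_integral_le_of_norm_le hpow
          ((ae_restrict_mem measurableSet_Ioi).mono hle)
    _ = s.re⁻¹ := by
        rw [integral_Ioi_rpow_of_lt (by linarith) one_pos, Real.one_rpow, sub_add_cancel,
          neg_div_neg_eq, one_div]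

lemma sub_one_mul_riemannZeta {s : ℂ} (hs : s ≠ 1) :
    (s - 1) * riemannZeta s = riemannZeta₁ s := by
  rw [riemannZeta_eq_inv_sub_mul hs, mul_inv_cancel_left₀ (sub_ne_zero.2 hs)]

lemma integral_floor_mul_cpow {s : ℂ} (hs : 1 < s.re) :
    ∫ t in Ioi (1 : ℝ), (⌊t⌋₊ : ℂ) * (t : ℂ) ^ (-(s + 1)) = (s - 1)⁻¹ - fractIntegral s := by
  have hpow : ∫ t in Ioi (1 : ℝ), (t : ℂ) ^ (-s) = (s - 1)⁻¹ := by
    rw [integral_Ioi_cpow_of_lt (by simpa) one_pos, ofReal_one, one_cpow,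
      show -s + 1 = -(s - 1) by ring, neg_div_neg_eq, one_div]
  rw [← hpow, fractIntegral_eq_integral,
    ← integral_sub (integrableOn_Ioi_cpow_of_lt (by simpa) one_pos)
      (integrableOn_cpow_mul_fract (by linarith))]
  refine setIntegral_congr_fun measurableSet_Ioi fun t ht ↦ ?_
  have ht0 : 0 < t := one_pos.trans ht
  have hfloor : ((⌊t⌋₊ : ℝ) : ℂ) = t - (Int.fract t : ℝ) := by
    rw [natCast_floor_eq_intCast_floor ht0.le, ← Int.self_sub_fract, ofReal_sub]
  have hcpow : (t : ℂ) ^ (-s) = t * (t : ℂ) ^ (-s - 1) := by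
    rw [cpow_sub _ _ (ofReal_ne_zero.2 ht0.ne'), cpow_one]
    field_simp [ofReal_ne_zero.2 ht0.ne']
  rw [ofReal_natCast] at hfloor
  simp only [hfloor, hcpow, neg_add', sub_mul]
  ring

lemma riemannZeta₁_eq_of_one_lt_re {s : ℂ} (hs : 1 < s.re) :
    riemannZeta₁ s = s - s * (s - 1) * fractIntegral s := by
  have hs1 : s ≠ 1 := by rintro rfl; simp at hs
  have hzeta : riemannZeta s =
      s * ∫ t in Ioi (1 : ℝ), (⌊t⌋₊ : ℂ) * (t : ℂ) ^ (-(s + 1)) := by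
    have hbdd : (fun n : ℕ ↦ ∑ k ∈ Finset.Icc 1 n, (1 : ℕ → ℂ) k) =O[atTop]
        fun n : ℕ ↦ (n : ℝ) ^ (1 : ℝ) := .of_bound 1 (.of_forall fun n ↦ by simp)
    simpa [LSeries_one_eq_riemannZeta hs] using
      LSeries_eq_mul_integral 1 zero_le_one hs (LSeriesSummable_one_iff.2 hs) hbdd
  rw [← sub_one_mul_riemannZeta hs1, hzeta, integral_floor_mul_cpow hs]
  field_simp [sub_ne_zero.2 hs1]

lemma riemannZeta₁_eq_of_re_pos {s : ℂ} (hs : 0 < s.re) :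
    riemannZeta₁ s = s - s * (s - 1) * fractIntegral s := by
  have hopen : IsOpen {z : ℂ | 0 < z.re} := isOpen_lt continuous_const continuous_re
  have hleft : AnalyticOnNhd ℂ riemannZeta₁ {z : ℂ | 0 < z.re} :=
    differentiable_riemannZeta₁.differentiableOn.analyticOnNhd hopen
  have hright : AnalyticOnNhd ℂ (fun z ↦ z - z * (z - 1) * fractIntegral z)
      {z : ℂ | 0 < z.re} := by
    refine DifferentiableOn.analyticOnNhd (fun z hz ↦ DifferentiableAt.differentiableWithinAt ?_)
      hopen
    have := differentiableAt_fractIntegral hz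
    fun_prop
  have hnear : ∀ᶠ z in 𝓝 (2 : ℂ), riemannZeta₁ z = z - z * (z - 1) * fractIntegral z := by
    filter_upwards [(isOpen_lt continuous_const continuous_re).mem_nhds
      (show (1 : ℝ) < (2 : ℂ).re by simp)] with z hz using riemannZeta₁_eq_of_one_lt_re hz
  exact hleft.eqOn_of_preconnected_of_eventuallyEq hright
    (convex_halfSpace_re_gt 0).isPreconnected (z₀ := 2) (by simp) hnear hs

lemma norm_riemannZeta₁_le {s : ℂ} (hs : 1 / 2 ≤ s.re) :
    ‖riemannZeta₁ s‖ ≤ 3 * (1 + ‖s‖) ^ 2 := by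
  have hfract : ‖fractIntegral s‖ ≤ 2 :=
    (norm_fractIntegral_le (by linarith)).trans (inv_le_of_inv_le₀ two_pos (by linarith))
  have hsub : ‖s - 1‖ ≤ ‖s‖ + 1 := by simpa using norm_sub_le s 1
  calc ‖riemannZeta₁ s‖ = ‖s - s * (s - 1) * fractIntegral s‖ := by
        rw [riemannZeta₁_eq_of_re_pos (by linarith)]
    _ ≤ ‖s‖ + ‖s‖ * ‖s - 1‖ * ‖fractIntegral s‖ := by
        simpa only [norm_mul] using norm_sub_le s (s * (s - 1) * fractIntegral s)
    _ ≤ ‖s‖ + ‖s‖ * (‖s‖ + 1) * 2 := by gcongr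
    _ ≤ 3 * (1 + ‖s‖) ^ 2 := by nlinarith [norm_nonneg s]

open scoped LSeries.notation in
lemma norm_inv_riemannZeta_le {s : ℂ} (hs : 1 < s.re) :
    ‖(riemannZeta s)⁻¹‖ ≤ ∑' n : ℕ, 1 / (n : ℝ) ^ s.re := by
  have hinv : (riemannZeta s)⁻¹ = L ↗ArithmeticFunction.moebius s := by
    refine inv_eq_of_mul_eq_one_right ?_
    rw [← ArithmeticFunction.LSeries_zeta_eq_riemannZeta hs]
    exact ArithmeticFunction.LSeries_zeta_mul_Lseries_moebius hs
  rw [hinv]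
  refine tsum_of_norm_bounded (Real.summable_one_div_nat_rpow.2 hs).hasSum fun n ↦ ?_
  refine (LSeries.norm_term_le s (g := 1) ?_).trans_eq ?_
  · simpa [Int.cast_abs] using mod_cast ArithmeticFunction.abs_moebius_le_one
  · rcases eq_or_ne n 0 with rfl | hn
    · simp [Real.zero_rpow (one_pos.trans hs).ne']
    · simp [hn, norm_natCast_cpow_of_pos (Nat.pos_of_ne_zero hn)]

lemma one_half_le_norm_riemannZeta₁ {s : ℂ} (hs : s.re = 2) : 1 / 2 ≤ ‖riemannZeta₁ s‖ := by
  have hs1 : s ≠ 1 := by rintro rfl; norm_num at hs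
  have hsub : 1 ≤ ‖s - 1‖ := by
    have := re_le_norm (s - 1)
    rw [sub_re, hs, one_re] at this
    linarith
  have hsum : ∑' n : ℕ, 1 / (n : ℝ) ^ s.re = Real.pi ^ 2 / 6 := by
    rw [hs, ← hasSum_zeta_two.tsum_eq]
    norm_cast
  have hinv : ‖riemannZeta s‖⁻¹ ≤ 2 := by
    rw [← norm_inv]
    refine (norm_inv_riemannZeta_le (by linarith)).trans ?_
    nlinarith [Real.pi_lt_d2, Real.pi_pos]
  have hzeta : 1 / 2 ≤ ‖riemannZeta s‖ := by
    rw [one_div]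
    exact inv_le_of_inv_le₀ (norm_pos_iff.2 (riemannZeta_ne_zero_of_one_le_re (by linarith))) hinv
  calc (1 / 2 : ℝ) ≤ ‖s - 1‖ * ‖riemannZeta s‖ := by nlinarith
    _ = ‖riemannZeta₁ s‖ := by rw [← norm_mul, sub_one_mul_riemannZeta hs1]

end ZetaGrowth

section LogDerivBound

open Complex Metric

variable {f g : ℂ → ℂ} {c s : ℂ} {r R M : ℝ}

lemma norm_le_of_re_le_of_eq_zero (hM : 0 < M) (hg : DifferentiableOn ℂ g (ball c R))
    (hre : ∀ z ∈ ball c R, (g z).re ≤ M) (hgc : g c = 0) (hs : s ∈ ball c R) :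
    ‖g s‖ ≤ 2 * M * ‖s - c‖ / (R - ‖s - c‖) := by
  have hmaps : Set.MapsTo (c + ·) (ball 0 R) (ball c R) := fun z hz ↦ by simpa using hz
  have hbound := borelCaratheodory_zero (f := fun z ↦ g (c + z)) (z := s - c) hM
    (hg.comp (by fun_prop) hmaps) (fun z hz ↦ hre _ (hmaps hz)) (pos_of_mem_ball hs)
    (by simpa [dist_eq_norm] using hs) (by simpa)
  simpa using hbound

lemma exists_hasDerivAt_logDeriv_and_eq_mul_exp (hR : 0 < R)
    (hf : DifferentiableOn ℂ f (ball c R)) (hf0 : ∀ z ∈ ball c R, f z ≠ 0) :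
    ∃ g : ℂ → ℂ, g c = 0 ∧ ∀ z ∈ ball c R,
      HasDerivAt g (logDeriv f z) z ∧ f z = f c * exp (g z) := by
  have hlog : DifferentiableOn ℂ (logDeriv f) (ball c R) := (hf.deriv isOpen_ball).div hf hf0
  obtain ⟨g, hgc, hg⟩ := hlog.isExactOn_ball.with_val_at c 0
  have hquot : ∀ z ∈ ball c R, HasDerivAt (fun w ↦ f w * exp (-g w)) 0 z := fun z hz ↦ by
    have hfz := (hf.differentiableAt (isOpen_ball.mem_nhds hz)).hasDerivAt
    convert! hfz.mul (hg z hz).neg.cexp using 1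
    rw [logDeriv_apply]
    field_simp [hf0 z hz]
    ring
  refine ⟨g, hgc, fun z hz ↦ ⟨hg z hz, ?_⟩⟩
  have hconst : f z * exp (-g z) = f c := by
    simpa [hgc] using isOpen_ball.is_const_of_deriv_eq_zero (convex_ball c R).isPreconnected
      (fun w hw ↦ (hquot w hw).differentiableAt.differentiableWithinAt)
      (fun w hw ↦ (hquot w hw).deriv) hz (mem_ball_self hR)
  rw [← hconst, mul_assoc, ← exp_add, neg_add_cancel, exp_zero, mul_one]

lemma norm_logDeriv_le_of_norm_le_exp_mul (hM : 0 < M) (hrR : r < R)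
    (hf : DifferentiableOn ℂ f (ball c R)) (hf0 : ∀ z ∈ ball c R, f z ≠ 0)
    (hfM : ∀ z ∈ ball c R, ‖f z‖ ≤ Real.exp M * ‖f c‖) (hs : s ∈ closedBall c r) :
    ‖logDeriv f s‖ ≤ 8 * M * R / (R - r) ^ 2 := by
  have hr : 0 ≤ r := dist_nonneg.trans hs
  have hc : c ∈ ball c R := mem_ball_self (by linarith)
  obtain ⟨g, hgc, hg⟩ := exists_hasDerivAt_logDeriv_and_eq_mul_exp (by linarith) hf hf0
  have hdiff : DifferentiableOn ℂ g (ball c R) := fun z hz ↦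
    (hg z hz).1.differentiableAt.differentiableWithinAt
  have hre : ∀ z ∈ ball c R, (g z).re ≤ M := fun z hz ↦ by
    have := hfM z hz
    rw [(hg z hz).2, norm_mul, norm_exp, mul_comm] at this
    exact Real.exp_le_exp.1 (le_of_mul_le_mul_right this (norm_pos_iff.2 (hf0 c hc)))
  have hsub : closedBall s ((R - r) / 2) ⊆ closedBall c ((R + r) / 2) :=
    closedBall_subset_closedBall' (by rw [mem_closedBall] at hs; linarith)
  have hsub' : closedBall c ((R + r) / 2) ⊆ ball c R := closedBall_subset_ball (by linarith)
  have hgM : ∀ z ∈ closedBall c ((R + r) / 2), ‖g z‖ ≤ 4 * M * R / (R - r) := fun z hz ↦ by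
    have hzc : ‖z - c‖ ≤ (R + r) / 2 := mem_closedBall_iff_norm.1 hz
    calc ‖g z‖ ≤ 2 * M * ‖z - c‖ / (R - ‖z - c‖) :=
          norm_le_of_re_le_of_eq_zero hM hdiff hre hgc (hsub' hz)
      _ ≤ 2 * M * R / ((R - r) / 2) := by
          have hR : 0 ≤ R := by linarith
          gcongr <;> linarith
      _ = 4 * M * R / (R - r) := by field_simp; ring
  have hcauchy := norm_deriv_le_of_forall_mem_sphere_norm_le (half_pos (sub_pos.2 hrR))
    ((hdiff.mono (hsub.trans hsub')).mono closure_ball_subset_closedBall).diffContOnCl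
    fun z hz ↦ hgM z (hsub (sphere_subset_closedBall hz))
  rw [(hg s (hsub' (hsub (mem_closedBall_self (by linarith))))).1.deriv] at hcauchy
  refine hcauchy.trans_eq ?_
  field_simp
  ring

lemma riemannZeta₁_ne_zero (hs : riemannZeta s ≠ 0) : riemannZeta₁ s ≠ 0 := by
  rcases eq_or_ne s 1 with rfl | hs1
  · simp
  · rw [← sub_one_mul_riemannZeta hs1]
    exact mul_ne_zero (sub_ne_zero.2 hs1) hs

lemma norm_riemannZeta₁_le_mul_of_mem_ball (hc : c.re = 2) (hs : s ∈ ball c (3 / 2)) :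
    ‖riemannZeta₁ s‖ ≤ 150 * (1 + |c.im|) ^ 2 * ‖riemannZeta₁ c‖ := by
  rw [mem_ball_iff_norm] at hs
  have hre : 1 / 2 ≤ s.re := by
    have := (abs_le.1 (abs_re_le_norm (s - c))).1
    rw [sub_re, hc] at this
    linarith
  have hnorm : 1 + ‖s‖ ≤ 5 * (1 + |c.im|) := by
    have hc' := norm_le_abs_re_add_abs_im c
    rw [hc, abs_two] at hc'
    linarith [norm_sub_norm_le s c, abs_nonneg c.im]
  calc ‖riemannZeta₁ s‖ ≤ 3 * (1 + ‖s‖) ^ 2 := norm_riemannZeta₁_le hre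
    _ ≤ 3 * (5 * (1 + |c.im|)) ^ 2 := by gcongr
    _ = 150 * (1 + |c.im|) ^ 2 * (1 / 2) := by ring
    _ ≤ 150 * (1 + |c.im|) ^ 2 * ‖riemannZeta₁ c‖ := by
        gcongr
        exact one_half_le_norm_riemannZeta₁ hc

lemma mul_sq_le_exp_mul_rpow {w ε : ℝ} (hw : 1 ≤ w) (hε : 0 < ε) :
    150 * w ^ 2 ≤ Real.exp ((149 + 2 / ε) * w ^ ε) := by
  have hw0 : 0 < w := one_pos.trans_le hw
  rw [← Real.log_le_iff_le_exp (by positivity), Real.log_mul (by norm_num) (by positivity),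
    Real.log_pow]
  have hconst : Real.log 150 ≤ 149 * w ^ ε := by
    have := Real.log_le_sub_one_of_pos (show (0 : ℝ) < 150 by norm_num)
    nlinarith [Real.one_le_rpow hw hε.le]
  have hlog := Real.log_le_rpow_div hw0.le hε
  calc Real.log 150 + (2 : ℕ) * Real.log w ≤ 149 * w ^ ε + 2 * (w ^ ε / ε) := by
        push_cast; gcongr
    _ = (149 + 2 / ε) * w ^ ε := by ring

lemma exists_norm_logDeriv_riemannZeta₁_le {σ σ' ε : ℝ} (hσ : 1 / 2 ≤ σ) (hσσ' : σ < σ')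
    (hε : 0 < ε) (hζ : ∀ s : ℂ, σ < s.re → riemannZeta s ≠ 0) :
    ∃ A : ℝ, ∀ s : ℂ, σ' ≤ s.re → s.re ≤ 2 →
      ‖logDeriv riemannZeta₁ s‖ ≤ A * (1 + |s.im|) ^ ε := by
  refine ⟨8 * (149 + 2 / ε) * (2 - σ) / (σ' - σ) ^ 2, fun s hs hs2 ↦ ?_⟩
  set c : ℂ := ⟨2, s.im⟩
  have hne : ∀ z ∈ ball c (2 - σ), riemannZeta₁ z ≠ 0 := fun z hz ↦ by
    refine riemannZeta₁_ne_zero (hζ z ?_)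
    have := (abs_lt.1 ((abs_re_le_norm (z - c)).trans_lt (mem_ball_iff_norm.1 hz))).1
    simp only [sub_re, c] at this
    linarith
  have hgrowth : ∀ z ∈ ball c (2 - σ), ‖riemannZeta₁ z‖ ≤
      Real.exp ((149 + 2 / ε) * (1 + |s.im|) ^ ε) * ‖riemannZeta₁ c‖ := fun z hz ↦
    (norm_riemannZeta₁_le_mul_of_mem_ball rfl (ball_subset_ball (by linarith) hz)).trans <| by
      gcongr
      exact mul_sq_le_exp_mul_rpow (by simp) hε
  have hs_mem : s ∈ closedBall c (2 - σ') := by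
    have hsc : s - c = ((s.re - 2 : ℝ) : ℂ) := by apply Complex.ext <;> simp [c]
    rw [mem_closedBall_iff_norm, hsc, norm_real, Real.norm_eq_abs, abs_le]
    constructor <;> linarith
  refine (norm_logDeriv_le_of_norm_le_exp_mul (by positivity) (by linarith)
    differentiable_riemannZeta₁.differentiableOn hne hgrowth hs_mem).trans_eq ?_
  rw [show 2 - σ - (2 - σ') = σ' - σ by ring]
  ring

end LogDerivBound

section VonMangoldtMoments

open ArithmeticFunction Finset
open scoped Chebyshev

/-- The weighted Chebyshev function `∑_{n ≤ t} n ^ k Λ(n)`; for `k = 0` it is `ψ`. -/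
noncomputable def psiMoment (k : ℕ) (t : ℝ) : ℝ := ∑ n ∈ Icc 1 ⌊t⌋₊, (n : ℝ) ^ k * Λ n

/-- Riesz mean `ψ₁(u) = ∑_{n ≤ u} Λ(n) (u - n)`, the continuous antiderivative of `ψ`. -/
noncomputable def psiOne (u : ℝ) : ℝ := ∑ n ∈ Icc 1 ⌊u⌋₊, Λ n * (u - n)

lemma psiMoment_zero (t : ℝ) : psiMoment 0 t = ψ t := by
  simp only [psiMoment, pow_zero, one_mul]
  rfl

lemma psiOne_eq_mul_sub (u : ℝ) : psiOne u = u * psiMoment 0 u - psiMoment 1 u := by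
  simp only [psiOne, psiMoment, mul_sum, ← sum_sub_distrib]
  exact sum_congr rfl fun n _ ↦ by ring

lemma psiMoment_nonneg (k : ℕ) (t : ℝ) : 0 ≤ psiMoment k t :=
  sum_nonneg fun _ _ ↦ mul_nonneg (by positivity) vonMangoldt_nonneg

lemma psiMoment_mono (k : ℕ) : Monotone (psiMoment k) := fun u v huv ↦
  sum_le_sum_of_subset_of_nonneg (Icc_subset_Icc_right (Nat.floor_mono huv))
    fun _ _ _ ↦ mul_nonneg (by positivity) vonMangoldt_nonneg

lemma psiMoment_le (k : ℕ) {t : ℝ} (ht : 0 ≤ t) :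
    psiMoment k t ≤ (Real.log 4 + 4) * t ^ (k + 1) :=
  calc psiMoment k t ≤ ∑ n ∈ Icc 1 ⌊t⌋₊, t ^ k * Λ n := by
        refine sum_le_sum fun n hn ↦ mul_le_mul_of_nonneg_right ?_ vonMangoldt_nonneg
        gcongr
        exact (Nat.le_floor_iff ht).1 (mem_Icc.1 hn).2
    _ = t ^ k * ψ t := (mul_sum ..).symm
    _ ≤ t ^ k * ((Real.log 4 + 4) * t) := by
        gcongr
        exact Chebyshev.psi_le_const_mul_self ht
    _ = (Real.log 4 + 4) * t ^ (k + 1) := by ring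

lemma psiOne_eq_sum_max {u : ℝ} {N : ℕ} (hN : ⌊u⌋₊ ≤ N) :
    psiOne u = ∑ n ∈ Icc 1 N, Λ n * max (u - n) 0 := by
  rw [psiOne, ← sum_subset (Icc_subset_Icc_right hN) (f := fun n ↦ Λ n * max (u - n) 0)]
  · refine sum_congr rfl fun n hn ↦ ?_
    have hnu : (n : ℝ) ≤ u :=
      (Nat.le_floor_iff' (Nat.one_le_iff_ne_zero.1 (mem_Icc.1 hn).1)).1 (mem_Icc.1 hn).2
    rw [max_eq_left (sub_nonneg.2 hnu)]
  · intro n hn hnu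
    have hun : u < n := Nat.lt_of_floor_lt (by simp_all)
    rw [max_eq_right (sub_nonpos.2 hun.le), mul_zero]

lemma continuous_psiOne : Continuous psiOne := by
  refine continuous_iff_continuousAt.2 fun x ↦ ?_
  have hcont : Continuous fun u : ℝ ↦ ∑ n ∈ Icc 1 ⌊x + 1⌋₊, Λ n * max (u - n) 0 := by fun_prop
  refine hcont.continuousAt.congr ?_
  filter_upwards [eventually_lt_nhds (lt_add_one x)] with u hu
  exact (psiOne_eq_sum_max (Nat.floor_mono hu.le)).symm

variable {u v : ℝ}

lemma psiOne_sub_psiOne (huv : u ≤ v) :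
    psiOne v - psiOne u = ∑ n ∈ Icc 1 ⌊v⌋₊, Λ n * (max (v - n) 0 - max (u - n) 0) := by
  rw [psiOne_eq_sum_max le_rfl, psiOne_eq_sum_max (Nat.floor_mono huv), ← sum_sub_distrib]
  simp only [mul_sub]

lemma psiOne_sub_psiOne_le (huv : u ≤ v) : psiOne v - psiOne u ≤ (v - u) * ψ v := by
  rw [psiOne_sub_psiOne huv, ← psiMoment_zero, psiMoment, mul_sum]
  refine sum_le_sum fun n _ ↦ ?_
  rw [pow_zero, one_mul, mul_comm]
  refine mul_le_mul_of_nonneg_right (sub_le_iff_le_add.2 (max_le ?_ ?_)) vonMangoldt_nonneg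
  · linarith [le_max_left (u - n) 0]
  · linarith [le_max_right (u - n) 0]

lemma mul_psi_le_psiOne_sub_psiOne (huv : u ≤ v) : (v - u) * ψ u ≤ psiOne v - psiOne u := by
  rw [psiOne_sub_psiOne huv, ← psiMoment_zero, psiMoment, mul_sum]
  refine (sum_le_sum fun n hn ↦ ?_).trans <| sum_le_sum_of_subset_of_nonneg
    (Icc_subset_Icc_right (Nat.floor_mono huv)) fun n _ _ ↦
      mul_nonneg vonMangoldt_nonneg (sub_nonneg.2 (by gcongr))
  have hnu : (n : ℝ) ≤ u :=
    (Nat.le_floor_iff' (Nat.one_le_iff_ne_zero.1 (mem_Icc.1 hn).1)).1 (mem_Icc.1 hn).2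
  rw [max_eq_left (by linarith), max_eq_left (by linarith)]
  exact le_of_eq (by ring)

end VonMangoldtMoments

section MellinOfPsiOneError

open Complex MeasureTheory Set Filter Asymptotics ArithmeticFunction

lemma integrableOn_Ioi_one_mul_cpow {f : ℝ → ℂ} {K a : ℝ} {s : ℂ}
    (hf : AEStronglyMeasurable f (volume.restrict (Ioi 1)))
    (hfK : ∀ t ∈ Ioi (1 : ℝ), ‖f t‖ ≤ K * t ^ a) (hs : a + 1 < s.re) :
    IntegrableOn (fun t : ℝ ↦ f t * (t : ℂ) ^ (-s)) (Ioi 1) := by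
  have hpow : IntegrableOn (fun t : ℝ ↦ K * t ^ (a - s.re)) (Ioi 1) :=
    (integrableOn_Ioi_rpow_of_lt (by linarith) one_pos).const_mul _
  refine hpow.mono' (hf.mul (measurable_ofReal.pow_const _).aestronglyMeasurable) ?_
  filter_upwards [ae_restrict_mem measurableSet_Ioi] with t ht
  have ht0 : 0 < t := one_pos.trans ht
  rw [norm_mul, norm_cpow_eq_rpow_re_of_pos ht0, sub_eq_add_neg, Real.rpow_add ht0, ← mul_assoc]
  exact mul_le_mul_of_nonneg_right (hfK t ht) (by positivity)

variable {s : ℂ}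

lemma add_natCast_ne_zero_of_re_pos (hs : 0 < s.re) (k : ℕ) : s + k ≠ 0 :=
  ne_zero_of_re_pos (by simpa using add_pos_of_pos_of_nonneg hs k.cast_nonneg)

lemma LSeries_vonMangoldt_eq_inv_sub_logDeriv (hs : 1 < s.re) :
    LSeries (fun n ↦ (Λ n : ℂ)) s = (s - 1)⁻¹ - logDeriv riemannZeta₁ s := by
  have hs1 : s ≠ 1 := by rintro rfl; simp at hs
  have hζ₁ : riemannZeta₁ s ≠ 0 := riemannZeta₁_ne_zero (riemannZeta_ne_zero_of_one_lt_re hs)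
  have hsub : s - 1 ≠ 0 := sub_ne_zero.2 hs1
  rw [LSeries_vonMangoldt_eq_deriv_riemannZeta_div hs,
    deriv_riemannZeta_eq_neg_inv_sub_sq_mul_add hs1, riemannZeta_eq_inv_sub_mul hs1,
    logDeriv_apply]
  field_simp
  ring

lemma LSeries_term_pow_mul_vonMangoldt (k : ℕ) (s : ℂ) :
    LSeries.term (fun n ↦ ((n ^ k * Λ n : ℝ) : ℂ)) (s + k) =
      LSeries.term (fun n ↦ (Λ n : ℂ)) s := by
  ext n
  rcases eq_or_ne n 0 with rfl | hn
  · simp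
  · have hn' : (n : ℂ) ≠ 0 := Nat.cast_ne_zero.2 hn
    rw [LSeries.term_of_ne_zero hn, LSeries.term_of_ne_zero hn, cpow_add _ _ hn', cpow_natCast]
    push_cast
    field_simp

lemma integrableOn_psiMoment_mul_cpow (k : ℕ) (hs : 1 < s.re) :
    IntegrableOn (fun t : ℝ ↦ (psiMoment k t : ℂ) * (t : ℂ) ^ (-(s + k + 1))) (Ioi 1) := by
  refine integrableOn_Ioi_one_mul_cpow (K := Real.log 4 + 4) (a := k + 1)
    (measurable_ofReal.comp (psiMoment_mono k).measurable).aestronglyMeasurable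
    (fun t ht ↦ ?_) (by simp; linarith)
  rw [norm_real, Real.norm_of_nonneg (psiMoment_nonneg k t)]
  exact_mod_cast psiMoment_le k (one_pos.trans ht).le

lemma LSeries_vonMangoldt_eq_mul_integral_psiMoment (k : ℕ) (hs : 1 < s.re) :
    LSeries (fun n ↦ (Λ n : ℂ)) s =
      (s + k) * ∫ t in Ioi (1 : ℝ), (psiMoment k t : ℂ) * (t : ℂ) ^ (-(s + k + 1)) := by
  have hterm := LSeries_term_pow_mul_vonMangoldt k s
  have hsummable : LSeriesSummable (fun n ↦ ((n ^ k * Λ n : ℝ) : ℂ)) (s + k) := by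
    rw [LSeriesSummable, hterm]
    exact LSeriesSummable_vonMangoldt hs
  have hbigO : (fun n : ℕ ↦ ∑ i ∈ Finset.Icc 1 n, ((i ^ k * Λ i : ℝ) : ℂ)) =O[atTop]
      fun n : ℕ ↦ (n : ℝ) ^ (k + 1 : ℝ) := by
    refine .of_bound (Real.log 4 + 4) (.of_forall fun n ↦ ?_)
    have hsum : ∑ i ∈ Finset.Icc 1 n, ((i ^ k * Λ i : ℝ) : ℂ) = psiMoment k n := by
      simp [psiMoment]
    rw [hsum, norm_real, Real.norm_of_nonneg (psiMoment_nonneg k n),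
      Real.norm_of_nonneg (by positivity)]
    exact_mod_cast psiMoment_le k n.cast_nonneg
  have hL := LSeries_eq_mul_integral _ (by positivity) (by simp; linarith) hsummable hbigO
  rw [LSeries, hterm] at hL
  rw [LSeries, hL]
  congr! with t
  simp [psiMoment]

lemma integral_pow_sub_one_mul_cpow (k : ℕ) (hs : 1 < s.re) :
    IntegrableOn (fun t : ℝ ↦ (((t ^ (k + 1) - 1) / (k + 1) : ℝ) : ℂ) *
      (t : ℂ) ^ (-(s + k + 1))) (Ioi 1) ∧
    ∫ t in Ioi (1 : ℝ), (((t ^ (k + 1) - 1) / (k + 1) : ℝ) : ℂ) * (t : ℂ) ^ (-(s + k + 1)) =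
      ((s + k) * (s - 1))⁻¹ := by
  have hk : (k + 1 : ℂ) ≠ 0 := Nat.cast_add_one_ne_zero k
  have hsplit : EqOn (fun t : ℝ ↦ (((t ^ (k + 1) - 1) / (k + 1) : ℝ) : ℂ) *
      (t : ℂ) ^ (-(s + k + 1)))
      (fun t : ℝ ↦ (k + 1 : ℂ)⁻¹ * ((t : ℂ) ^ (-s) - (t : ℂ) ^ (-(s + k + 1)))) (Ioi 1) := by
    intro t ht
    have ht0 : (t : ℂ) ≠ 0 := ofReal_ne_zero.2 (one_pos.trans ht).ne'
    have hcpow : (t : ℂ) ^ (-s) = (t : ℂ) ^ (k + 1) * (t : ℂ) ^ (-(s + k + 1)) := by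
      rw [← cpow_natCast, ← cpow_add _ _ ht0]
      push_cast
      ring_nf
    simp only [hcpow]
    push_cast
    ring
  have hre : (-(s + k + 1)).re < -1 := by
    have : (0 : ℝ) ≤ k := k.cast_nonneg
    simp
    linarith
  have hint := integrableOn_Ioi_cpow_of_lt (a := -s) (by simpa) one_pos
  have hint' := integrableOn_Ioi_cpow_of_lt hre one_pos
  refine ⟨(integrableOn_congr_fun hsplit measurableSet_Ioi).2
    ((hint.sub hint').const_mul _), ?_⟩
  have hs1 : s - 1 ≠ 0 := fun h ↦ by simp [sub_eq_zero.1 h] at hs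
  have hsk : s + k ≠ 0 := add_natCast_ne_zero_of_re_pos (by linarith) k
  rw [setIntegral_congr_fun measurableSet_Ioi hsplit, integral_const_mul, integral_sub hint hint',
    integral_Ioi_cpow_of_lt (by simpa) one_pos, integral_Ioi_cpow_of_lt hre one_pos,
    show -s + 1 = -(s - 1) by ring, show -(s + k + 1) + 1 = -(s + k) by ring]
  simp only [ofReal_one, one_cpow, neg_div_neg_eq]
  field_simp
  ring

/-- The `k`-th moment of `Λ` minus its main term `∫₁ᵗ v ^ k dv`. -/
noncomputable def psiMomentError (k : ℕ) (t : ℝ) : ℝ :=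
  psiMoment k t - (t ^ (k + 1) - 1) / (k + 1)

lemma integral_psiMomentError_mul_cpow (k : ℕ) (hs : 1 < s.re) :
    IntegrableOn (fun t : ℝ ↦ (psiMomentError k t : ℂ) * (t : ℂ) ^ (-(s + k + 1))) (Ioi 1) ∧
    ∫ t in Ioi (1 : ℝ), (psiMomentError k t : ℂ) * (t : ℂ) ^ (-(s + k + 1)) =
      -logDeriv riemannZeta₁ s / (s + k) := by
  have hs1 : s - 1 ≠ 0 := fun h ↦ by simp [sub_eq_zero.1 h] at hs
  have hsk : s + k ≠ 0 := add_natCast_ne_zero_of_re_pos (by linarith) k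
  have hmoment := integrableOn_psiMoment_mul_cpow k hs
  obtain ⟨hmain, hmain_eq⟩ := integral_pow_sub_one_mul_cpow k hs
  have hmoment_eq := LSeries_vonMangoldt_eq_mul_integral_psiMoment k hs
  rw [LSeries_vonMangoldt_eq_inv_sub_logDeriv hs, mul_comm, ← div_eq_iff hsk] at hmoment_eq
  simp only [psiMomentError, ofReal_sub _ ((_ : ℝ) / _), sub_mul]
  refine ⟨hmoment.sub hmain, ?_⟩
  rw [integral_sub hmoment hmain, hmain_eq, ← hmoment_eq]
  field_simp
  ring

/-- The error in `ψ₁(u) ≈ (u - 1)² / 2`. This main term, rather than `u² / 2`, makes the error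
continuous when it is cut off at `u = 1`, so that its Mellin transform decays quadratically. -/
noncomputable def psiOneError (u : ℝ) : ℝ := psiOne u - (u - 1) ^ 2 / 2

lemma continuous_psiOneError : Continuous psiOneError :=
  continuous_psiOne.sub (by fun_prop)

lemma psiOneError_eq_mul_sub (u : ℝ) :
    psiOneError u = u * psiMomentError 0 u - psiMomentError 1 u := by
  simp only [psiOneError, psiOne_eq_mul_sub, psiMomentError]
  norm_num
  ring

/-- The Mellin transform of `psiOneError`, cut off at `1`, in the variable `-(s + 1)`. For
`0 < re s` it is holomorphic wherever `ζ` does not vanish, also at `s = 1`, because `riemannZeta₁`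
is entire. -/
noncomputable def psiOneErrorMellin (s : ℂ) : ℂ := -logDeriv riemannZeta₁ s / (s * (s + 1))

lemma mellin_indicator_psiOneError (hs : 1 < s.re) :
    MellinConvergent ((Ioi 1).indicator fun t ↦ (psiOneError t : ℂ)) (-(s + 1)) ∧
    mellin ((Ioi 1).indicator fun t ↦ (psiOneError t : ℂ)) (-(s + 1)) = psiOneErrorMellin s := by
  have hs0 : s ≠ 0 := ne_zero_of_re_pos (by linarith)
  have hs1 : s + 1 ≠ 0 := mod_cast add_natCast_ne_zero_of_re_pos (by linarith) 1
  obtain ⟨hint₀, heq₀⟩ := integral_psiMomentError_mul_cpow 0 hs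
  obtain ⟨hint₁, heq₁⟩ := integral_psiMomentError_mul_cpow 1 hs
  have hsplit : EqOn (fun t : ℝ ↦ (t : ℂ) ^ (-(s + 1) - 1) • (psiOneError t : ℂ))
      (fun t : ℝ ↦ (psiMomentError 0 t : ℂ) * (t : ℂ) ^ (-(s + (0 : ℕ) + 1)) -
        (psiMomentError 1 t : ℂ) * (t : ℂ) ^ (-(s + (1 : ℕ) + 1))) (Ioi 1) := by
    intro t ht
    have ht0 : (t : ℂ) ≠ 0 := ofReal_ne_zero.2 (one_pos.trans ht).ne'
    have hcpow : (t : ℂ) ^ (-(s + (0 : ℕ) + 1)) = t * (t : ℂ) ^ (-(s + (1 : ℕ) + 1)) := by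
      nth_rw 2 [← cpow_one (t : ℂ)]
      rw [← cpow_add _ _ ht0]
      push_cast
      ring_nf
    simp only [hcpow, psiOneError_eq_mul_sub, smul_eq_mul, ← neg_add', Nat.cast_one]
    push_cast
    ring
  rw [mellinConvergent_indicator_Ioi zero_le_one, mellin_indicator_Ioi zero_le_one,
    integrableOn_congr_fun hsplit measurableSet_Ioi, setIntegral_congr_fun measurableSet_Ioi hsplit,
    integral_sub hint₀ hint₁, heq₀, heq₁]
  refine ⟨hint₀.sub hint₁, ?_⟩
  rw [psiOneErrorMellin, Nat.cast_zero, Nat.cast_one, add_zero]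
  field_simp
  ring

end MellinOfPsiOneError

section ContourShift

open Complex MeasureTheory Set Filter Topology

variable {F : ℂ → ℂ} {a b A κ : ℝ}

lemma integrable_vertical_line (hκ : 1 < κ) (hF : ContinuousOn F (re ⁻¹' {a}))
    (hFA : ∀ s : ℂ, s.re = a → ‖F s‖ ≤ A * (1 + |s.im|) ^ (-κ)) :
    Integrable fun y : ℝ ↦ F (a + y * I) := by
  have hdecay : Integrable fun y : ℝ ↦ A * (1 + ‖y‖) ^ (-κ) :=
    (integrable_one_add_norm (by simpa)).const_mul _
  refine hdecay.mono' ?_ (.of_forall fun y ↦ by simpa using hFA (a + y * I) (by simp))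
  exact (hF.comp_continuous (by fun_prop) fun y ↦ by simp).aestronglyMeasurable

lemma tendsto_integral_horizontal_segment (hκ : 0 < κ) (hab : a ≤ b)
    (hFA : ∀ s ∈ re ⁻¹' Icc a b, ‖F s‖ ≤ A * (1 + |s.im|) ^ (-κ)) :
    Tendsto (fun T : ℝ ↦ ∫ u in a..b, F (u + T * I)) (cocompact ℝ) (𝓝 0) := by
  have hlim : Tendsto (fun T : ℝ ↦ A * (1 + |T|) ^ (-κ) * |b - a|) (cocompact ℝ) (𝓝 0) := by
    have hdecay := (tendsto_rpow_neg_atTop hκ).comp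
      (tendsto_atTop_add_const_left _ 1 (tendsto_norm_cocompact_atTop (E := ℝ)))
    simpa using (hdecay.const_mul A).mul_const |b - a|
  refine squeeze_zero_norm (fun T ↦ ?_) hlim
  refine intervalIntegral.norm_integral_le_of_norm_le_const fun u hu ↦ ?_
  rw [uIoc_of_le hab] at hu
  simpa using hFA (u + T * I) (by simpa using Ioc_subset_Icc_self hu)

lemma integral_vertical_line_eq (hκ : 1 < κ) (hab : a ≤ b)
    (hF : DifferentiableOn ℂ F (re ⁻¹' Icc a b))
    (hFA : ∀ s ∈ re ⁻¹' Icc a b, ‖F s‖ ≤ A * (1 + |s.im|) ^ (-κ)) :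
    ∫ y : ℝ, F (b + y * I) = ∫ y : ℝ, F (a + y * I) := by
  have hvert : ∀ c ∈ Icc a b, Tendsto (fun T : ℝ ↦ ∫ y in (-T)..T, F (c + y * I)) atTop
      (𝓝 (∫ y : ℝ, F (c + y * I))) := fun c hc ↦ by
    have hsub : re ⁻¹' {c} ⊆ re ⁻¹' Icc a b := preimage_mono (singleton_subset_iff.2 hc)
    exact intervalIntegral_tendsto_integral
      (integrable_vertical_line hκ (hF.continuousOn.mono hsub) fun s hs ↦ hFA s (hsub hs))
      tendsto_neg_atTop_atBot tendsto_id
  have hhoriz := tendsto_integral_horizontal_segment (one_pos.trans hκ) hab hFA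
  have htop := hhoriz.mono_left atTop_le_cocompact
  have hbot := (hhoriz.mono_left atBot_le_cocompact).comp tendsto_neg_atTop_atBot
  have hrect : ∀ T : ℝ, (∫ u in a..b, F (u + (-T : ℝ) * I)) - (∫ u in a..b, F (u + T * I)) +
      I • (∫ y in (-T)..T, F (b + y * I)) - I • (∫ y in (-T)..T, F (a + y * I)) = 0 := fun T ↦ by
    refine integral_boundary_rect_eq_zero_of_differentiableOn F ⟨a, -T⟩ ⟨b, T⟩ (hF.mono ?_)
    intro s hs
    simpa only [uIcc_of_le hab] using hs.1
  have hlim := ((hbot.sub htop).add ((hvert b (right_mem_Icc.2 hab)).const_smul I)).sub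
    ((hvert a (left_mem_Icc.2 hab)).const_smul I)
  have hzero := tendsto_nhds_unique (hlim.congr hrect) tendsto_const_nhds
  rw [sub_zero, zero_add, ← smul_sub] at hzero
  exact sub_eq_zero.1 ((smul_eq_zero.1 hzero).resolve_left I_ne_zero)

end ContourShift

section PsiOneErrorFormula

open Complex MeasureTheory Set Filter

lemma differentiableAt_psiOneErrorMellin {s : ℂ} (hs : 0 < s.re) (hζ : riemannZeta s ≠ 0) :
    DifferentiableAt ℂ psiOneErrorMellin s := by
  have hlog : DifferentiableAt ℂ (logDeriv riemannZeta₁) s :=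
    (differentiable_riemannZeta₁.deriv s).div (differentiable_riemannZeta₁ s)
      (riemannZeta₁_ne_zero hζ)
  have hs1 : s + 1 ≠ 0 := mod_cast add_natCast_ne_zero_of_re_pos hs 1
  exact hlog.neg.div (by fun_prop) (mul_ne_zero (ne_zero_of_re_pos hs) hs1)

lemma one_add_abs_im_div_three_le_norm {s : ℂ} (hs : 1 / 2 ≤ s.re) :
    (1 + |s.im|) / 3 ≤ ‖s‖ := by
  linarith [(le_abs_self s.re).trans (abs_re_le_norm s), abs_im_le_norm s]

variable {σ σ' : ℝ}

lemma exists_norm_psiOneErrorMellin_le (hσ : 1 / 2 ≤ σ) (hσσ' : σ < σ')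
    (hζ : ∀ s : ℂ, σ < s.re → riemannZeta s ≠ 0) {ε : ℝ} (hε : 0 < ε) :
    ∃ A : ℝ, ∀ s ∈ re ⁻¹' Icc σ' 2, ‖psiOneErrorMellin s‖ ≤ A * (1 + |s.im|) ^ (-(2 - ε)) := by
  obtain ⟨A, hA⟩ := exists_norm_logDeriv_riemannZeta₁_le hσ hσσ' hε hζ
  refine ⟨9 * A, fun s hs ↦ ?_⟩
  have hw : 0 < 1 + |s.im| := by positivity
  have hlog := hA s hs.1 hs.2
  have hs_norm : (1 + |s.im|) / 3 ≤ ‖s‖ :=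
    one_add_abs_im_div_three_le_norm (by linarith [hs.1])
  have hs1_norm : (1 + |s.im|) / 3 ≤ ‖s + 1‖ := by
    have hre : 1 / 2 ≤ (s + 1).re := by simp; linarith [hs.1]
    simpa using one_add_abs_im_div_three_le_norm hre
  have hpow : (1 + |s.im|) ^ (-(2 - ε)) = (1 + |s.im|) ^ ε / (1 + |s.im|) ^ 2 := by
    rw [neg_sub, Real.rpow_sub hw, Real.rpow_two]
  calc ‖psiOneErrorMellin s‖ = ‖logDeriv riemannZeta₁ s‖ / (‖s‖ * ‖s + 1‖) := by
        rw [psiOneErrorMellin, norm_div, norm_neg, norm_mul]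
    _ ≤ A * (1 + |s.im|) ^ ε / ((1 + |s.im|) / 3 * ((1 + |s.im|) / 3)) := by
        have := (norm_nonneg _).trans hlog
        gcongr
    _ = 9 * A * (1 + |s.im|) ^ (-(2 - ε)) := by
        rw [hpow]
        field_simp
        norm_num

lemma differentiableOn_cpow_mul_psiOneErrorMellin {x : ℝ} (hx : 0 < x) (hσ : 0 ≤ σ)
    (hζ : ∀ s : ℂ, σ < s.re → riemannZeta s ≠ 0) :
    DifferentiableOn ℂ (fun s ↦ (x : ℂ) ^ (s + 1) * psiOneErrorMellin s) (re ⁻¹' Ioi σ) := by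
  intro s hs
  have hx0 : (x : ℂ) ≠ 0 := ofReal_ne_zero.2 hx.ne'
  have hmellin := differentiableAt_psiOneErrorMellin (hσ.trans_lt hs) (hζ s hs)
  have hcpow : DifferentiableAt ℂ (fun s : ℂ ↦ (x : ℂ) ^ (s + 1)) s :=
    (by fun_prop : DifferentiableAt ℂ (fun s : ℂ ↦ s + 1) s).const_cpow (Or.inl hx0)
  exact (hcpow.mul hmellin).differentiableWithinAt

lemma exists_norm_cpow_mul_psiOneErrorMellin_le (hσ : 1 / 2 ≤ σ) (hσσ' : σ < σ')
    (hζ : ∀ s : ℂ, σ < s.re → riemannZeta s ≠ 0) {x : ℝ} (hx : 1 ≤ x) :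
    ∃ A : ℝ, ∀ s ∈ re ⁻¹' Icc σ' 2,
      ‖(x : ℂ) ^ (s + 1) * psiOneErrorMellin s‖ ≤ A * (1 + |s.im|) ^ (-(3 / 2) : ℝ) := by
  obtain ⟨A, hA⟩ := exists_norm_psiOneErrorMellin_le hσ hσσ' hζ one_half_pos
  refine ⟨x ^ (3 : ℝ) * A, fun s hs ↦ ?_⟩
  have hle : ‖(x : ℂ) ^ (s + 1)‖ ≤ x ^ (3 : ℝ) := by
    rw [norm_cpow_eq_rpow_re_of_pos (one_pos.trans_le hx)]
    refine Real.rpow_le_rpow_of_exponent_le hx ?_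
    simp
    linarith [hs.2]
  have hA' := hA s hs
  norm_num at hA'
  rw [norm_mul, mul_assoc]
  exact mul_le_mul hle hA' (norm_nonneg _) (by positivity)

lemma integrable_cpow_mul_psiOneErrorMellin (hσ : 1 / 2 ≤ σ) (hσσ' : σ < σ') (hσ'2 : σ' ≤ 2)
    (hζ : ∀ s : ℂ, σ < s.re → riemannZeta s ≠ 0) {x : ℝ} (hx : 1 ≤ x) :
    Integrable fun y : ℝ ↦ (x : ℂ) ^ ((σ' + y * I : ℂ) + 1) * psiOneErrorMellin (σ' + y * I) := by
  obtain ⟨A, hA⟩ := exists_norm_cpow_mul_psiOneErrorMellin_le hσ hσσ' hζ hx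
  refine integrable_vertical_line (F := fun s ↦ (x : ℂ) ^ (s + 1) * psiOneErrorMellin s)
    (A := A) (κ := 3 / 2) (by norm_num) ?_ fun s hs ↦ hA s ⟨hs.ge, hs.trans_le hσ'2⟩
  refine (differentiableOn_cpow_mul_psiOneErrorMellin (one_pos.trans_le hx) (by linarith)
    hζ).continuousOn.mono (preimage_mono (singleton_subset_iff.2 hσσ'))

lemma psiOneError_eq_integral_line_two {x : ℝ} (hx : 1 < x) :
    (psiOneError x : ℂ) = (1 / (2 * Real.pi) : ℝ) •
      ∫ y : ℝ, (x : ℂ) ^ (((2 : ℝ) + y * I : ℂ) + 1) * psiOneErrorMellin ((2 : ℝ) + y * I) := by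
  set f : ℝ → ℂ := (Ioi 1).indicator fun t ↦ (psiOneError t : ℂ) with hf
  have hfx : ∀ᶠ t in nhds x, f t = psiOneError t := by
    filter_upwards [eventually_gt_nhds hx] with t ht
    simp [hf, ht]
  have hcont : ContinuousAt f x :=
    (continuous_ofReal.comp continuous_psiOneError).continuousAt.congr
      (hfx.mono fun t ht ↦ ht.symm)
  have hmellin : ∀ y : ℝ, mellin f ((-3 : ℝ) + y * I) =
      psiOneErrorMellin ((2 : ℝ) + (-y : ℝ) * I) := fun y ↦ by
    rw [← (mellin_indicator_psiOneError (s := (2 : ℝ) + (-y : ℝ) * I) (by simp)).2]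
    congr 1
    push_cast
    ring
  have hconv : MellinConvergent f (-3 : ℝ) := by
    convert (mellin_indicator_psiOneError (s := 2) (by simp)).1 using 1
    push_cast
    ring
  have hvert : VerticalIntegrable (mellin f) (-3) := by
    have hint := integrable_cpow_mul_psiOneErrorMellin (σ := 1) (σ' := 2) (by norm_num)
      one_lt_two le_rfl (fun s hs ↦ riemannZeta_ne_zero_of_one_le_re hs.le) le_rfl
    exact hint.comp_neg.congr (.of_forall fun y ↦ by simpa using (hmellin y).symm)
  rw [← hfx.self_of_nhds, ← mellinInv_mellin_eq (-3) f (one_pos.trans hx) hconv hvert hcont,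
    mellinInv, ← integral_neg_eq_self]
  congr 2 with y
  rw [hmellin, smul_eq_mul, neg_neg]
  congr 2
  push_cast
  ring

lemma psiOneError_eq_integral (hσ : 1 / 2 ≤ σ) (hσσ' : σ < σ') (hσ'2 : σ' ≤ 2)
    (hζ : ∀ s : ℂ, σ < s.re → riemannZeta s ≠ 0) {x : ℝ} (hx : 1 < x) :
    (psiOneError x : ℂ) = (1 / (2 * Real.pi) : ℝ) •
      ∫ y : ℝ, (x : ℂ) ^ ((σ' + y * I : ℂ) + 1) * psiOneErrorMellin (σ' + y * I) := by
  obtain ⟨A, hA⟩ := exists_norm_cpow_mul_psiOneErrorMellin_le hσ hσσ' hζ hx.le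
  have hdiff := (differentiableOn_cpow_mul_psiOneErrorMellin (one_pos.trans hx) (by linarith)
    hζ).mono (preimage_mono (Icc_subset_Ioi_iff hσ'2 |>.2 hσσ'))
  rw [psiOneError_eq_integral_line_two hx]
  exact congrArg _ (integral_vertical_line_eq (by norm_num) hσ'2 hdiff hA)

end PsiOneErrorFormula

section CpowDifference

open Complex Set

variable {u v : ℝ} {w : ℂ}

lemma norm_cpow_sub_cpow_le_mul (hu : 0 < u) (huv : u ≤ v) (hw : 1 ≤ w.re) :
    ‖(v : ℂ) ^ w - (u : ℂ) ^ w‖ ≤ ‖w‖ * v ^ (w.re - 1) * (v - u) := by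
  have hderiv : ∀ t ∈ Icc u v,
      HasDerivWithinAt (fun t : ℝ ↦ (t : ℂ) ^ w) (w * (t : ℂ) ^ (w - 1)) (Icc u v) t := by
    intro t ht
    have ht0 : 0 < t := hu.trans_le ht.1
    simpa using ((hasDerivAt_id (t : ℂ)).cpow_const (c := w)
      (Or.inl (by simpa using ht0))).comp_ofReal.hasDerivWithinAt (s := Icc u v)
  have hbound : ∀ t ∈ Icc u v, ‖w * (t : ℂ) ^ (w - 1)‖ ≤ ‖w‖ * v ^ (w.re - 1) := by
    intro t ht
    have ht0 : 0 < t := hu.trans_le ht.1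
    rw [norm_mul, norm_cpow_eq_rpow_re_of_pos ht0, sub_re, one_re]
    gcongr
    exact ht.2
  simpa [abs_of_nonneg (sub_nonneg.2 huv)] using
    Convex.norm_image_sub_le_of_norm_hasDerivWithin_le hderiv hbound (convex_Icc _ _)
      (left_mem_Icc.2 huv) (right_mem_Icc.2 huv)

lemma norm_cpow_sub_cpow_le_two_mul (hu : 0 < u) (huv : u ≤ v) (hw : 0 ≤ w.re) :
    ‖(v : ℂ) ^ w - (u : ℂ) ^ w‖ ≤ 2 * v ^ w.re := by
  refine (norm_sub_le _ _).trans ?_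
  rw [norm_cpow_eq_rpow_re_of_pos (hu.trans_le huv), norm_cpow_eq_rpow_re_of_pos hu, two_mul]
  gcongr

lemma norm_cpow_sub_cpow_le_rpow (hu : 0 < u) (huv : u ≤ v) (hw : 1 ≤ w.re) {δ : ℝ}
    (hδ₀ : 0 ≤ δ) (hδ₁ : δ ≤ 1) :
    ‖(v : ℂ) ^ w - (u : ℂ) ^ w‖ ≤
      2 * (‖w‖ ^ (1 - δ) * (v - u) ^ (1 - δ) * v ^ (w.re - 1 + δ)) := by
  have hv : 0 < v := hu.trans_le huv
  have hδ₁' : 0 ≤ 1 - δ := sub_nonneg.2 hδ₁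
  have huv' : 0 ≤ v - u := sub_nonneg.2 huv
  calc ‖(v : ℂ) ^ w - (u : ℂ) ^ w‖
      = ‖(v : ℂ) ^ w - (u : ℂ) ^ w‖ ^ δ * ‖(v : ℂ) ^ w - (u : ℂ) ^ w‖ ^ (1 - δ) := by
        rw [← Real.rpow_add_of_nonneg (norm_nonneg _) hδ₀ hδ₁', add_sub_cancel, Real.rpow_one]
    _ ≤ (2 * v ^ w.re) ^ δ * (‖w‖ * v ^ (w.re - 1) * (v - u)) ^ (1 - δ) := by
        gcongr
        exacts [norm_cpow_sub_cpow_le_two_mul hu huv (by linarith),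
          norm_cpow_sub_cpow_le_mul hu huv hw]
    _ = 2 ^ δ * (‖w‖ ^ (1 - δ) * (v - u) ^ (1 - δ) * v ^ (w.re - 1 + δ)) := by
        rw [Real.mul_rpow two_pos.le (by positivity), Real.mul_rpow (by positivity) huv',
          Real.mul_rpow (norm_nonneg _) (by positivity), ← Real.rpow_mul hv.le,
          ← Real.rpow_mul hv.le, show w.re - 1 + δ = w.re * δ + (w.re - 1) * (1 - δ) by ring,
          Real.rpow_add hv]
        ring
    _ ≤ 2 * (‖w‖ ^ (1 - δ) * (v - u) ^ (1 - δ) * v ^ (w.re - 1 + δ)) := by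
        gcongr
        exact Real.rpow_le_self_of_one_le one_le_two hδ₁

end CpowDifference

section ChebyshevError

open Complex MeasureTheory Set

variable {σ σ' β : ℝ}

lemma norm_add_mul_I_add_one_le (hσ'0 : 0 ≤ σ') (hσ'2 : σ' ≤ 2) (y : ℝ) :
    ‖(σ' + y * I : ℂ) + 1‖ ≤ 3 * (1 + |y|) := by
  have h := norm_le_abs_re_add_abs_im ((σ' + y * I : ℂ) + 1)
  simp [abs_of_nonneg (by linarith : 0 ≤ σ' + 1)] at h
  linarith [abs_nonneg y]

lemma exists_norm_cpow_sub_cpow_mul_psiOneErrorMellin_le (hσ : 1 / 2 ≤ σ) (hσσ' : σ < σ')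
    (hσ'2 : σ' ≤ 2) (hζ : ∀ s : ℂ, σ < s.re → riemannZeta s ≠ 0) {δ : ℝ} (hδ₀ : 0 < δ)
    (hδ₁ : δ ≤ 1) :
    ∃ A : ℝ, ∀ u v : ℝ, 0 < u → u ≤ v → ∀ y : ℝ,
      ‖((v : ℂ) ^ ((σ' + y * I : ℂ) + 1) - (u : ℂ) ^ ((σ' + y * I : ℂ) + 1)) *
          psiOneErrorMellin (σ' + y * I)‖ ≤
        A * ((v - u) ^ (1 - δ) * v ^ (σ' + δ)) * (1 + ‖y‖) ^ (-(1 + δ / 2)) := by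
  obtain ⟨A, hA⟩ := exists_norm_psiOneErrorMellin_le hσ hσσ' hζ (half_pos hδ₀)
  refine ⟨6 * A, fun u v hu huv y ↦ ?_⟩
  have hv : 0 < v := hu.trans_le huv
  have hy : 0 < 1 + |y| := by positivity
  have hmellin : ‖psiOneErrorMellin (σ' + y * I)‖ ≤ A * (1 + |y|) ^ (-(2 - δ / 2)) := by
    simpa using hA (σ' + y * I) (by simp [hσ'2])
  have hcpow := norm_cpow_sub_cpow_le_rpow (w := (σ' + y * I : ℂ) + 1) hu huv
    (by simp; linarith) hδ₀.le hδ₁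
  have hnorm : ‖(σ' + y * I : ℂ) + 1‖ ^ (1 - δ) ≤ 3 * (1 + |y|) ^ (1 - δ) := by
    calc ‖(σ' + y * I : ℂ) + 1‖ ^ (1 - δ) ≤ (3 * (1 + |y|)) ^ (1 - δ) := by
          gcongr
          exact norm_add_mul_I_add_one_le (by linarith) hσ'2 y
      _ = 3 ^ (1 - δ) * (1 + |y|) ^ (1 - δ) := Real.mul_rpow (by norm_num) hy.le
      _ ≤ 3 * (1 + |y|) ^ (1 - δ) := by
          gcongr
          exact Real.rpow_le_self_of_one_le (by norm_num) (by linarith)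
  rw [norm_mul, Real.norm_eq_abs, show -(1 + δ / 2) = (1 - δ) + -(2 - δ / 2) by ring,
    Real.rpow_add hy]
  calc _ ≤ 2 * (3 * (1 + |y|) ^ (1 - δ) * (v - u) ^ (1 - δ) * v ^ (σ' + δ)) *
        (A * (1 + |y|) ^ (-(2 - δ / 2))) := by
        refine mul_le_mul (hcpow.trans ?_) hmellin (norm_nonneg _) (by positivity)
        simp only [add_re, ofReal_re, mul_re, I_re, mul_zero, ofReal_im, I_im, mul_one, sub_self,
          add_zero, one_re, add_sub_cancel_right]
        gcongr
    _ = _ := by ring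

lemma exists_abs_psiOneError_sub_le (hσ : 1 / 2 ≤ σ) (hσσ' : σ < σ') (hσ'2 : σ' ≤ 2)
    (hζ : ∀ s : ℂ, σ < s.re → riemannZeta s ≠ 0) {δ : ℝ} (hδ₀ : 0 < δ) (hδ₁ : δ ≤ 1) :
    ∃ B : ℝ, ∀ u v : ℝ, 1 < u → u ≤ v →
      |psiOneError v - psiOneError u| ≤ B * ((v - u) ^ (1 - δ) * v ^ (σ' + δ)) := by
  obtain ⟨A, hA⟩ :=
    exists_norm_cpow_sub_cpow_mul_psiOneErrorMellin_le hσ hσσ' hσ'2 hζ hδ₀ hδ₁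
  refine ⟨1 / (2 * Real.pi) * (A * ∫ y : ℝ, (1 + ‖y‖) ^ (-(1 + δ / 2))), fun u v hu huv ↦ ?_⟩
  have hdecay : Integrable fun y : ℝ ↦ (1 + ‖y‖) ^ (-(1 + δ / 2)) :=
    integrable_one_add_norm (by simpa using hδ₀)
  have hintegral := norm_integral_le_of_norm_le
    (hdecay.const_mul (A * ((v - u) ^ (1 - δ) * v ^ (σ' + δ))))
    (.of_forall (hA u v (one_pos.trans hu) huv))
  have hformula : ((psiOneError v - psiOneError u : ℝ) : ℂ) = (1 / (2 * Real.pi) : ℝ) •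
      ∫ y : ℝ, ((v : ℂ) ^ ((σ' + y * I : ℂ) + 1) - (u : ℂ) ^ ((σ' + y * I : ℂ) + 1)) *
        psiOneErrorMellin (σ' + y * I) := by
    have hint {t : ℝ} (ht : 1 < t) :=
      integrable_cpow_mul_psiOneErrorMellin hσ hσσ' hσ'2 hζ ht.le
    simp_rw [sub_mul]
    rw [integral_sub (hint (hu.trans_le huv)) (hint hu), smul_sub, ofReal_sub,
      ← psiOneError_eq_integral hσ hσσ' hσ'2 hζ hu,
      ← psiOneError_eq_integral hσ hσσ' hσ'2 hζ (hu.trans_le huv)]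
  rw [integral_const_mul] at hintegral
  rw [← Real.norm_eq_abs, ← norm_real, hformula, norm_smul, Real.norm_of_nonneg (by positivity)]
  calc _ ≤ 1 / (2 * Real.pi) * _ := mul_le_mul_of_nonneg_left hintegral (by positivity)
    _ = _ := by ring

lemma exists_abs_psiOneError_sub_le_mul_sqrt (hσ : 1 / 2 ≤ σ) (hσβ : σ < β) (hβ : β ≤ 1)
    (hζ : ∀ s : ℂ, σ < s.re → riemannZeta s ≠ 0) :
    ∃ B : ℝ, 0 ≤ B ∧ ∀ t u v : ℝ, 1 ≤ t → 1 < u → v = u + √t → v ≤ 2 * t →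
      |psiOneError v - psiOneError u| ≤ B * (√t * t ^ β) := by
  obtain ⟨B, hB⟩ := exists_abs_psiOneError_sub_le (σ' := (σ + β) / 2) hσ (by linarith)
    (by linarith) hζ (sub_pos.2 hσβ) (by linarith)
  refine ⟨|B| * 4, by positivity, fun t u v ht hu hv hvt ↦ ?_⟩
  have ht0 : 0 < t := one_pos.trans_le ht
  have hexp : 0 ≤ (σ + β) / 2 + (β - σ) := by linarith
  calc |psiOneError v - psiOneError u|
      ≤ B * ((v - u) ^ (1 - (β - σ)) * v ^ ((σ + β) / 2 + (β - σ))) :=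
        hB u v hu (by linarith [Real.sqrt_nonneg t])
    _ ≤ |B| * (√t ^ (1 - (β - σ)) * (2 * t) ^ ((σ + β) / 2 + (β - σ))) := by
        have hv0 : 0 ≤ v := by linarith [Real.sqrt_nonneg t]
        rw [show v - u = √t by linarith]
        gcongr
        exact le_abs_self B
    _ = |B| * 2 ^ ((σ + β) / 2 + (β - σ)) * (√t * t ^ β) := by
        have hpow : √t ^ (1 - (β - σ)) * t ^ ((σ + β) / 2 + (β - σ)) = √t * t ^ β := by
          rw [Real.sqrt_eq_rpow, ← Real.rpow_mul ht0.le, ← Real.rpow_add ht0, ← Real.rpow_add ht0]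
          ring_nf
        rw [Real.mul_rpow two_pos.le ht0.le, ← hpow]
        ring
    _ ≤ |B| * 4 * (√t * t ^ β) := by
        gcongr
        calc (2 : ℝ) ^ ((σ + β) / 2 + (β - σ)) ≤ 2 ^ (2 : ℝ) :=
              Real.rpow_le_rpow_of_exponent_le one_le_two (by linarith)
          _ = 4 := by norm_num

lemma exists_psi_sub_le (hσ : 1 / 2 ≤ σ) (hσβ : σ < β) (hβ : β ≤ 1)
    (hζ : ∀ s : ℂ, σ < s.re → riemannZeta s ≠ 0) :
    ∃ B : ℝ, 0 ≤ B ∧ ∀ t : ℝ, 1 < t → Chebyshev.psi t - t ≤ B * t ^ β + √t := by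
  obtain ⟨B, hB, hdiff⟩ := exists_abs_psiOneError_sub_le_mul_sqrt hσ hσβ hβ hζ
  refine ⟨B, hB, fun t ht ↦ ?_⟩
  have hsqrt : 1 < √t := Real.lt_sqrt_of_sq_lt (by linarith)
  have hsq : √t * √t = t := Real.mul_self_sqrt (by linarith)
  have hstep := (abs_le.1 (hdiff t t (t + √t) ht.le ht rfl (by nlinarith))).2
  have hpsi := mul_psi_le_psiOne_sub_psiOne (u := t) (v := t + √t) (by linarith)
  simp only [psiOneError] at hstep
  refine le_of_mul_le_mul_left ?_ (one_pos.trans hsqrt)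
  nlinarith

lemma exists_le_psi_sub (hσ : 1 / 2 ≤ σ) (hσβ : σ < β) (hβ : β ≤ 1)
    (hζ : ∀ s : ℂ, σ < s.re → riemannZeta s ≠ 0) :
    ∃ B : ℝ, 0 ≤ B ∧ ∀ t : ℝ, 4 ≤ t → -(B * t ^ β + 2 * √t) ≤ Chebyshev.psi t - t := by
  obtain ⟨B, hB, hdiff⟩ := exists_abs_psiOneError_sub_le_mul_sqrt hσ hσβ hβ hζ
  refine ⟨B, hB, fun t ht ↦ ?_⟩
  have hsqrt : 2 ≤ √t := Real.le_sqrt_of_sq_le (by linarith)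
  have hsq : √t * √t = t := Real.mul_self_sqrt (by linarith)
  have hstep := (abs_le.1 (hdiff t (t - √t) t (by linarith) (by nlinarith) (by ring)
    (by linarith))).1
  have hpsi := psiOne_sub_psiOne_le (u := t - √t) (v := t) (by linarith)
  simp only [psiOneError] at hstep
  refine le_of_mul_le_mul_left (a := √t) ?_ (by linarith)
  nlinarith

lemma exists_abs_psi_sub_le (hσ : 1 / 2 ≤ σ) (hσβ : σ < β) (hβ : β ≤ 1)
    (hζ : ∀ s : ℂ, σ < s.re → riemannZeta s ≠ 0) :
    ∃ B : ℝ, 0 ≤ B ∧ ∀ t : ℝ, 1 ≤ t → |Chebyshev.psi t - t| ≤ B * t ^ β := by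
  obtain ⟨B₁, hB₁, hupper⟩ := exists_psi_sub_le hσ hσβ hβ hζ
  obtain ⟨B₂, hB₂, hlower⟩ := exists_le_psi_sub hσ hσβ hβ hζ
  refine ⟨B₁ + B₂ + 4, by positivity, fun t ht ↦ ?_⟩
  have hsqrt : √t ≤ t ^ β := by
    rw [Real.sqrt_eq_rpow]
    exact Real.rpow_le_rpow_of_exponent_le ht (by linarith)
  have hone : 1 ≤ t ^ β := Real.one_le_rpow ht (by linarith)
  have hB₁t : 0 ≤ B₁ * t ^ β := by positivity
  have hB₂t : 0 ≤ B₂ * t ^ β := by positivity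
  rw [add_mul, add_mul, abs_le]
  constructor
  · rcases lt_or_ge t 4 with ht4 | ht4
    · linarith [Chebyshev.psi_nonneg t]
    · linarith [hlower t ht4]
  · rcases ht.eq_or_lt with rfl | ht1
    · linarith [Chebyshev.psi_eq_zero_of_lt_two one_lt_two]
    · linarith [hupper t ht1]

lemma exists_abs_theta_sub_le (hσ : 1 / 2 ≤ σ) (hσβ : σ < β) (hβ : β ≤ 1)
    (hζ : ∀ s : ℂ, σ < s.re → riemannZeta s ≠ 0) :
    ∃ B : ℝ, 1 ≤ B ∧ ∀ t : ℝ, 1 ≤ t → |Chebyshev.theta t - t| ≤ B * t ^ β := by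
  obtain ⟨B, hB, hpsi⟩ := exists_abs_psi_sub_le hσ hσβ hβ hζ
  obtain ⟨C, hC⟩ := Chebyshev.psi_sub_theta_le_mul_sqrt
  refine ⟨B + |C| + 1, by linarith [abs_nonneg C], fun t ht ↦ ?_⟩
  have hpsi_theta : Chebyshev.psi t - Chebyshev.theta t ≤ |C| * t ^ β := by
    refine (hC t).trans (mul_le_mul (le_abs_self C) ?_ (Real.sqrt_nonneg t) (abs_nonneg C))
    rw [Real.sqrt_eq_rpow]
    exact Real.rpow_le_rpow_of_exponent_le ht (by linarith)
  have hpos : 0 ≤ t ^ β := by positivity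
  have := abs_le.1 (hpsi t ht)
  rw [add_mul, add_mul, abs_le]
  constructor <;> linarith [Chebyshev.theta_le_psi t]

end ChebyshevError

section PrimeSums

open MeasureTheory Set

variable {f f' : ℝ → ℝ} {y z : ℝ}

lemma intervalIntegrable_const_div (a : ℝ) {b c : ℝ} (hb : 0 < b) (hbc : b ≤ c) :
    IntervalIntegrable (fun t : ℝ ↦ a / t) volume b c := by
  refine ContinuousOn.intervalIntegrable (continuousOn_const.div continuousOn_id fun t ht ↦ ?_)
  rw [uIcc_of_le hbc] at ht
  exact (hb.trans_le ht.1).ne'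

lemma integral_const_div {a b c : ℝ} (hb : 0 < b) (hc : 0 < c) :
    ∫ t in b..c, a / t = a * Real.log (c / b) := by
  simp_rw [div_eq_mul_inv a]
  rw [intervalIntegral.integral_const_mul, integral_inv_of_pos hb hc]

lemma sum_primes_mul_log_sub_integral (hy : 0 ≤ y) (hyz : y ≤ z)
    (hf : ∀ t ∈ Icc y z, HasDerivAt f (f' t) t) (hf' : ContinuousOn f' (Icc y z)) :
    ∑ p ∈ Finset.Ioc ⌊y⌋₊ ⌊z⌋₊ with p.Prime, f p * Real.log p - ∫ t in y..z, f t =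
      f z * (Chebyshev.theta z - z) - f y * (Chebyshev.theta y - y) -
        ∫ t in y..z, f' t * (Chebyshev.theta t - t) := by
  have hderiv : IntegrableOn (deriv f) (Icc y z) :=
    (integrableOn_congr_fun (fun t ht ↦ (hf t ht).deriv) measurableSet_Icc).2
      (hf'.integrableOn_compact isCompact_Icc)
  have hAbel := sum_mul_eq_sub_sub_integral_mul (fun k ↦ if k.Prime then Real.log k else 0) hy hyz
    (fun t ht ↦ (hf t ht).differentiableAt) hderiv
  simp only [← Finset.sum_filter, ← Chebyshev.theta_eq_sum_Icc, mul_ite, mul_zero] at hAbel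
  rw [hAbel, setIntegral_congr_fun measurableSet_Ioc fun t ht ↦ by
    rw [(hf t (Ioc_subset_Icc_self ht)).deriv], ← intervalIntegral.integral_of_le hyz]
  rw [← uIcc_of_le hyz] at hf hf'
  have hf_int : IntervalIntegrable f volume y z :=
    ContinuousOn.intervalIntegrable fun t ht ↦ (hf t ht).continuousAt.continuousWithinAt
  have hf'_int : IntervalIntegrable (fun t ↦ f' t * t) volume y z :=
    (hf'.mul continuousOn_id).intervalIntegrable
  have htheta_int : IntervalIntegrable (fun t ↦ f' t * Chebyshev.theta t) volume y z :=
    Chebyshev.theta_mono.intervalIntegrable.continuousOn_mul hf'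
  have hparts : ∫ t in y..z, (f' t * t + f t) = f z * z - f y * y :=
    intervalIntegral.integral_eq_sub_of_hasDerivAt (f := fun t ↦ f t * t)
      (fun t ht ↦ by simpa using (hf t ht).fun_mul (hasDerivAt_id' t)) (hf'_int.add hf_int)
  rw [intervalIntegral.integral_add hf'_int hf_int] at hparts
  simp_rw [mul_sub]
  rw [intervalIntegral.integral_sub htheta_int hf'_int]
  linarith

variable {B α M : ℝ}

lemma abs_sum_primes_mul_log_sub_integral_le (hB : 0 ≤ B)
    (hθ : ∀ t : ℝ, 1 ≤ t → |Chebyshev.theta t - t| ≤ B * t ^ α) (hy : 1 ≤ y) (hyz : y ≤ z)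
    (hf : ∀ t ∈ Icc y z, HasDerivAt f (f' t) t) (hf' : ContinuousOn f' (Icc y z))
    (hM : ∀ t ∈ Icc y z, |f' t| * t ^ α ≤ M / t) :
    |∑ p ∈ Finset.Ioc ⌊y⌋₊ ⌊z⌋₊ with p.Prime, f p * Real.log p - ∫ t in y..z, f t| ≤
      B * (|f z| * z ^ α + |f y| * y ^ α + M * Real.log (z / y)) := by
  have hy0 : 0 < y := one_pos.trans_le hy
  have hendpoint : ∀ t, 1 ≤ t → |f t * (Chebyshev.theta t - t)| ≤ B * (|f t| * t ^ α) := by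
    intro t ht
    rw [abs_mul, mul_left_comm]
    exact mul_le_mul_of_nonneg_left (hθ t ht) (abs_nonneg _)
  have hintegral : |∫ t in y..z, f' t * (Chebyshev.theta t - t)| ≤
      B * (M * Real.log (z / y)) := by
    calc |∫ t in y..z, f' t * (Chebyshev.theta t - t)| ≤ ∫ t in y..z, B * M / t := by
          rw [← Real.norm_eq_abs]
          refine intervalIntegral.norm_integral_le_of_norm_le hyz (.of_forall fun t ht ↦ ?_)
            (intervalIntegrable_const_div _ hy0 hyz)
          calc ‖f' t * (Chebyshev.theta t - t)‖ ≤ |f' t| * (B * t ^ α) := by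
                rw [Real.norm_eq_abs, abs_mul]
                gcongr
                exact hθ t (hy.trans ht.1.le)
            _ = B * (|f' t| * t ^ α) := by ring
            _ ≤ B * (M / t) := by
                gcongr
                exact hM t (Ioc_subset_Icc_self ht)
            _ = B * M / t := by ring
      _ = B * (M * Real.log (z / y)) := by
          rw [integral_const_div hy0 (hy0.trans_le hyz), mul_assoc]
  rw [sum_primes_mul_log_sub_integral hy0.le hyz hf hf', mul_add, mul_add]
  refine (abs_sub _ _).trans (add_le_add ((abs_sub _ _).trans ?_) hintegral)
  exact add_le_add (hendpoint z (hy.trans hyz)) (hendpoint y hy)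

lemma theta_sub_theta (hyz : y ≤ z) :
    Chebyshev.theta z - Chebyshev.theta y =
      ∑ p ∈ Finset.Ioc ⌊y⌋₊ ⌊z⌋₊ with p.Prime, Real.log p := by
  have hsplit : Finset.Ioc 0 ⌊z⌋₊ = Finset.Ioc 0 ⌊y⌋₊ ∪ Finset.Ioc ⌊y⌋₊ ⌊z⌋₊ :=
    (Finset.Ioc_union_Ioc_eq_Ioc (Nat.zero_le _) (Nat.floor_mono hyz)).symm
  have hdisj : Disjoint (Finset.Ioc 0 ⌊y⌋₊) (Finset.Ioc ⌊y⌋₊ ⌊z⌋₊) :=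
    Finset.Ioc_disjoint_Ioc_of_le le_rfl
  rw [Chebyshev.theta, Chebyshev.theta, hsplit, Finset.filter_union,
    Finset.sum_union (Finset.disjoint_filter_filter hdisj), add_sub_cancel_left]

end PrimeSums

section PrimePairs

/-- The ordered pairs of primes in the hyperbolic triangle with sides `p = y`, `q = y` and
`p * q = X`; the ranges of the box are those forced by these three constraints. -/
noncomputable def primePairs (X y : ℝ) : Finset (ℕ × ℕ) :=
  {pq ∈ Finset.Ioc ⌊y⌋₊ ⌊X / y⌋₊ ×ˢ Finset.Ioc ⌊y⌋₊ ⌊X / y⌋₊ |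
    pq.1.Prime ∧ pq.2.Prime ∧ (pq.1 : ℝ) * pq.2 ≤ X}

/-- The count of `primePairs X y` in which each pair has the weight `log p * log q`, which makes
it comparable with the area of the triangle. -/
noncomputable def pairLogSum (X y : ℝ) : ℝ :=
  ∑ pq ∈ primePairs X y, Real.log pq.1 * Real.log pq.2

variable {X X' y : ℝ}

lemma mem_primePairs (hy : 0 < y) {pq : ℕ × ℕ} :
    pq ∈ primePairs X y ↔
      pq.1.Prime ∧ pq.2.Prime ∧ y < pq.1 ∧ y < pq.2 ∧ (pq.1 : ℝ) * pq.2 ≤ X := by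
  simp only [primePairs, Finset.mem_filter, Finset.mem_product, Finset.mem_Ioc,
    Nat.floor_lt hy.le]
  refine ⟨fun ⟨⟨⟨hp, _⟩, hq, _⟩, hp', hq', hX⟩ ↦ ⟨hp', hq', hp, hq, hX⟩,
    fun ⟨hp', hq', hp, hq, hX⟩ ↦
      ⟨⟨⟨hp, Nat.le_floor ?_⟩, hq, Nat.le_floor ?_⟩, hp', hq', hX⟩⟩ <;>
  · rw [le_div_iff₀ hy]
    nlinarith

lemma primePairs_subset (hy : 0 < y) (hX : X' ≤ X) : primePairs X' y ⊆ primePairs X y := by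
  intro pq hpq
  rw [mem_primePairs hy] at hpq ⊢
  exact ⟨hpq.1, hpq.2.1, hpq.2.2.1, hpq.2.2.2.1, hpq.2.2.2.2.trans hX⟩

lemma pairLogSum_eq_sum_theta_sub_theta (hy : 0 < y) (hX : 0 ≤ X) :
    pairLogSum X y = ∑ p ∈ Finset.Ioc ⌊y⌋₊ ⌊X / y⌋₊ with p.Prime,
      (Chebyshev.theta (X / p) - Chebyshev.theta y) * Real.log p := by
  have hfiber : ∀ pq : ℕ × ℕ, pq ∈ primePairs X y ↔
      pq.1 ∈ (Finset.Ioc ⌊y⌋₊ ⌊X / y⌋₊).filter Nat.Prime ∧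
        pq.2 ∈ (Finset.Ioc ⌊y⌋₊ ⌊X / pq.1⌋₊).filter Nat.Prime := fun ⟨p, q⟩ ↦ by
    simp only [mem_primePairs hy, Finset.mem_filter, Finset.mem_Ioc, Nat.floor_lt hy.le]
    refine ⟨fun ⟨hp', hq', hp, hq, hpq⟩ ↦ ?_, fun ⟨⟨⟨hp, _⟩, hp'⟩, ⟨hq, hqX⟩, hq'⟩ ↦ ?_⟩
    · have hp0 : (0 : ℝ) < p := hy.trans hp
      refine ⟨⟨⟨hp, Nat.le_floor ?_⟩, hp'⟩, ⟨hq, Nat.le_floor ?_⟩, hq'⟩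
      · rw [le_div_iff₀ hy]
        nlinarith [hpq]
      · rw [le_div_iff₀ hp0]
        linarith
    · have hp0 : (0 : ℝ) < p := hy.trans hp
      have hle := (Nat.le_floor_iff (by positivity)).1 hqX
      rw [le_div_iff₀ hp0] at hle
      exact ⟨hp', hq', hp, hq, by linarith⟩
  rw [pairLogSum, Finset.sum_finset_product _ _
    (fun p : ℕ ↦ (Finset.Ioc ⌊y⌋₊ ⌊X / p⌋₊).filter Nat.Prime) hfiber]
  refine Finset.sum_congr rfl fun p hp ↦ ?_
  simp only [Finset.mem_filter, Finset.mem_Ioc, Nat.floor_lt hy.le] at hp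
  have hp0 : (0 : ℝ) < p := hy.trans hp.1.1
  have hpX := (Nat.le_floor_iff (by positivity)).1 hp.1.2
  have hyX : y ≤ X / p := by rwa [le_div_comm₀ hy hp0]
  rw [theta_sub_theta hyX, mul_comm, Finset.mul_sum]

end PrimePairs

section HyperbolicTriangle

open MeasureTheory Set

/-- The area of the hyperbolic triangle `{(s, t) | y < s, y < t, s * t ≤ X}` divided by `X`, as a
function of `u = log (X / y ^ 2)`. -/
noncomputable def triangleArea (u : ℝ) : ℝ := u - 1 + Real.exp (-u)

variable {X y : ℝ}

lemma exp_neg_log_div_sq (hX : 0 < X) (hy : 0 < y) :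
    Real.exp (-Real.log (X / y ^ 2)) = y ^ 2 / X := by
  rw [← Real.log_inv, inv_div, Real.exp_log (by positivity)]

lemma integral_div_sub_eq_mul_triangleArea (hy : 0 < y) (hX : y ^ 2 ≤ X) :
    ∫ t in y..X / y, (X / t - y) = X * triangleArea (Real.log (X / y ^ 2)) := by
  have hX0 : 0 < X := (pow_pos hy 2).trans_le hX
  have hyz : y ≤ X / y := by rwa [le_div_iff₀ hy, ← sq]
  rw [intervalIntegral.integral_sub (intervalIntegrable_const_div X hy hyz) (by simp),
    integral_const_div hy (by positivity), intervalIntegral.integral_const, smul_eq_mul,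
    triangleArea, exp_neg_log_div_sq hX0 hy, div_div, ← sq]
  field_simp
  ring

variable {B α : ℝ}

lemma abs_sum_primes_div_sub_mul_log_sub_le (hB : 0 ≤ B) (hα : α ≤ 1)
    (hθ : ∀ t : ℝ, 1 ≤ t → |Chebyshev.theta t - t| ≤ B * t ^ α) (hy : 1 ≤ y) (hX : y ^ 2 ≤ X) :
    |∑ p ∈ Finset.Ioc ⌊y⌋₊ ⌊X / y⌋₊ with p.Prime, (X / p - y) * Real.log p -
        X * triangleArea (Real.log (X / y ^ 2))| ≤
      2 * B * (X * y ^ (α - 1) * Real.log (X / y ^ 2)) := by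
  have hy0 : 0 < y := one_pos.trans_le hy
  have hX0 : 0 < X := (pow_pos hy0 2).trans_le hX
  have hyz : y ≤ X / y := by rwa [le_div_iff₀ hy0, ← sq]
  have hsum := abs_sum_primes_mul_log_sub_integral_le (f := fun t ↦ X / t - y)
    (f' := fun t ↦ -X / t ^ 2) (M := X * y ^ (α - 1)) hB hθ hy hyz ?deriv ?cont ?bound
  case deriv =>
    intro t ht
    simpa [neg_div, div_eq_mul_inv] using
      ((hasDerivAt_inv (hy0.trans_le ht.1).ne').const_mul X).sub_const y
  case cont =>
    exact continuousOn_const.div (by fun_prop) fun t ht ↦ (pow_pos (hy0.trans_le ht.1) 2).ne'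
  case bound =>
    intro t ht
    have ht0 : 0 < t := hy0.trans_le ht.1
    calc |-X / t ^ 2| * t ^ α = X * t ^ (α - 1) / t := by
          rw [abs_div, abs_neg, abs_of_pos hX0, abs_of_pos (by positivity),
            Real.rpow_sub_one ht0.ne']
          field_simp
      _ ≤ X * y ^ (α - 1) / t := by
          gcongr X * ?_ / t
          exact Real.rpow_le_rpow_of_nonpos hy0 ht.1 (by linarith)
  have hendpoint : |X / y - y| * y ^ α ≤ X * y ^ (α - 1) * Real.log (X / y ^ 2) := by
    have hlog := Real.add_one_le_exp (-Real.log (X / y ^ 2))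
    rw [exp_neg_log_div_sq hX0 hy0] at hlog
    rw [abs_of_nonneg (sub_nonneg.2 hyz), Real.rpow_sub_one hy0.ne']
    calc (X / y - y) * y ^ α = X * (y ^ α / y) * (1 - y ^ 2 / X) := by field_simp
      _ ≤ X * (y ^ α / y) * Real.log (X / y ^ 2) := by
          gcongr
          linarith
  rw [integral_div_sub_eq_mul_triangleArea hy0 hX, div_div_cancel₀ hX0.ne', sub_self, abs_zero,
    zero_mul, zero_add, div_div, ← sq] at hsum
  calc _ ≤ B * (X * y ^ (α - 1) * Real.log (X / y ^ 2) +
          X * y ^ (α - 1) * Real.log (X / y ^ 2)) := hsum.trans (by gcongr)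
    _ = _ := by ring

lemma integral_div_rpow_le (hα : α ≤ 1) (hy : 0 < y) (hX : y ^ 2 ≤ X) :
    ∫ t in y..X / y, X ^ α * t ^ (-α) ≤ X * y ^ (α - 1) * Real.log (X / y ^ 2) := by
  have hX0 : 0 < X := (pow_pos hy 2).trans_le hX
  have hyz : y ≤ X / y := by rwa [le_div_iff₀ hy, ← sq]
  have hcont : ContinuousOn (fun t : ℝ ↦ X ^ α * t ^ (-α)) (uIcc y (X / y)) := by
    refine continuousOn_const.mul (continuousOn_id.rpow_const fun t ht ↦ Or.inl ?_)
    rw [uIcc_of_le hyz] at ht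
    exact (hy.trans_le ht.1).ne'
  calc ∫ t in y..X / y, X ^ α * t ^ (-α) ≤ ∫ t in y..X / y, X * y ^ (α - 1) / t := by
        refine intervalIntegral.integral_mono_on hyz hcont.intervalIntegrable
          (intervalIntegrable_const_div _ hy hyz) fun t ht ↦ ?_
        have ht0 : 0 < t := hy.trans_le ht.1
        have hyt : y ≤ X / t := by
          rw [le_div_comm₀ hy ht0]
          exact ht.2
        calc X ^ α * t ^ (-α) = X / t * (X / t) ^ (α - 1) := by
              rw [Real.rpow_neg ht0.le, ← div_eq_mul_inv, ← Real.div_rpow hX0.le ht0.le,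
                Real.rpow_sub_one (by positivity)]
              field_simp
          _ ≤ X / t * y ^ (α - 1) := by
              gcongr X / t * ?_
              exact Real.rpow_le_rpow_of_nonpos hy hyt (by linarith)
          _ = X * y ^ (α - 1) / t := by ring
    _ = X * y ^ (α - 1) * Real.log (X / y ^ 2) := by
        rw [integral_const_div hy (by positivity), div_div, ← sq]

lemma sum_primes_rpow_mul_log_le (hB : 0 ≤ B) (hα₀ : 0 ≤ α) (hα₁ : α ≤ 1)
    (hθ : ∀ t : ℝ, 1 ≤ t → |Chebyshev.theta t - t| ≤ B * t ^ α) (hy : 1 ≤ y) (hX : y ^ 2 ≤ X) :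
    ∑ p ∈ Finset.Ioc ⌊y⌋₊ ⌊X / y⌋₊ with p.Prime, X ^ α * (p : ℝ) ^ (-α) * Real.log p ≤
      X * y ^ (α - 1) * Real.log (X / y ^ 2) + B * (X ^ α * (2 + Real.log (X / y ^ 2))) := by
  have hy0 : 0 < y := one_pos.trans_le hy
  have hX0 : 0 < X := (pow_pos hy0 2).trans_le hX
  have hyz : y ≤ X / y := by rwa [le_div_iff₀ hy0, ← sq]
  have hsum := abs_sum_primes_mul_log_sub_integral_le (f := fun t ↦ X ^ α * t ^ (-α))
    (f' := fun t ↦ X ^ α * (-α * t ^ (-α - 1))) (M := X ^ α) hB hθ hy hyz ?deriv ?cont ?bound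
  case deriv =>
    exact fun t ht ↦
      (Real.hasDerivAt_rpow_const (Or.inl (hy0.trans_le ht.1).ne')).const_mul _
  case cont =>
    refine continuousOn_const.mul (continuousOn_const.mul (continuousOn_id.rpow_const ?_))
    exact fun t ht ↦ Or.inl (hy0.trans_le ht.1).ne'
  case bound =>
    intro t ht
    have ht0 : 0 < t := hy0.trans_le ht.1
    calc |X ^ α * (-α * t ^ (-α - 1))| * t ^ α = α * (X ^ α * (t ^ (-α - 1) * t ^ α)) := by
          rw [abs_mul, abs_mul, abs_neg, abs_of_nonneg hα₀, abs_of_pos (by positivity),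
            abs_of_pos (by positivity)]
          ring
      _ = α * (X ^ α / t) := by
          rw [← Real.rpow_add ht0, sub_add_eq_add_sub, neg_add_cancel, zero_sub,
            Real.rpow_neg_one, div_eq_mul_inv]
      _ ≤ X ^ α / t := mul_le_of_le_one_left (by positivity) hα₁
  have hendpoint : ∀ t : ℝ, 0 < t → |X ^ α * t ^ (-α)| * t ^ α = X ^ α := fun t ht ↦ by
    rw [abs_of_pos (by positivity), mul_assoc, ← Real.rpow_add ht, neg_add_cancel,
      Real.rpow_zero, mul_one]
  rw [hendpoint _ (by positivity), hendpoint _ hy0, div_div, ← sq] at hsum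
  linarith [(abs_le.1 hsum).2, integral_div_rpow_le hα₁ hy0 hX]

lemma abs_theta_sub_theta_sub_sub_le (hB : 0 ≤ B) (hα : 0 ≤ α)
    (hθ : ∀ t : ℝ, 1 ≤ t → |Chebyshev.theta t - t| ≤ B * t ^ α) {z : ℝ} (hy : 1 ≤ y)
    (hyz : y ≤ z) :
    |Chebyshev.theta z - Chebyshev.theta y - (z - y)| ≤ 2 * B * z ^ α := by
  have hle : B * y ^ α ≤ B * z ^ α := by gcongr
  have hz_le := abs_le.1 (hθ z (hy.trans hyz))
  have hy_le := abs_le.1 (hθ y hy)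
  rw [abs_le]
  constructor <;> linarith

lemma abs_pairLogSum_sub_sum_le (hB : 0 ≤ B) (hα : 0 ≤ α)
    (hθ : ∀ t : ℝ, 1 ≤ t → |Chebyshev.theta t - t| ≤ B * t ^ α) (hy : 1 ≤ y) (hX : 0 ≤ X) :
    |pairLogSum X y - ∑ p ∈ Finset.Ioc ⌊y⌋₊ ⌊X / y⌋₊ with p.Prime, (X / p - y) * Real.log p| ≤
      2 * B * ∑ p ∈ Finset.Ioc ⌊y⌋₊ ⌊X / y⌋₊ with p.Prime,
        X ^ α * (p : ℝ) ^ (-α) * Real.log p := by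
  have hy0 : 0 < y := one_pos.trans_le hy
  rw [pairLogSum_eq_sum_theta_sub_theta hy0 hX, ← Finset.sum_sub_distrib, Finset.mul_sum]
  refine (Finset.abs_sum_le_sum_abs _ _).trans (Finset.sum_le_sum fun p hp ↦ ?_)
  simp only [Finset.mem_filter, Finset.mem_Ioc, Nat.floor_lt hy0.le] at hp
  have hp0 : (0 : ℝ) < p := hy0.trans hp.1.1
  have hpX := (Nat.le_floor_iff (by positivity)).1 hp.1.2
  have hyX : y ≤ X / p := by rwa [le_div_comm₀ hy0 hp0]
  rw [← sub_mul, abs_mul, abs_of_nonneg (Real.log_natCast_nonneg p), ← mul_assoc,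
    Real.rpow_neg hp0.le, ← div_eq_mul_inv, ← Real.div_rpow hX hp0.le]
  gcongr
  exact abs_theta_sub_theta_sub_sub_le hB hα hθ hy hyX

lemma abs_pairLogSum_sub_mul_triangleArea_le (hB : 1 ≤ B) (hα₀ : 0 ≤ α) (hα₁ : α ≤ 1)
    (hθ : ∀ t : ℝ, 1 ≤ t → |Chebyshev.theta t - t| ≤ B * t ^ α) (hy : 1 ≤ y) (hX : y ^ 2 ≤ X) :
    |pairLogSum X y - X * triangleArea (Real.log (X / y ^ 2))| ≤
      4 * B ^ 2 * (X * y ^ (α - 1) * Real.log (X / y ^ 2) +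
        X ^ α * (1 + Real.log (X / y ^ 2))) := by
  have hy0 : 0 < y := one_pos.trans_le hy
  have hX0 : 0 < X := (pow_pos hy0 2).trans_le hX
  have hB0 : 0 ≤ B := zero_le_one.trans hB
  have hu : 0 ≤ Real.log (X / y ^ 2) := Real.log_nonneg ((one_le_div (by positivity)).2 hX)
  have hdiff := abs_pairLogSum_sub_sum_le hB0 hα₀ hθ hy hX0.le
  have hmain := abs_sum_primes_div_sub_mul_log_sub_le hB0 hα₁ hθ hy hX
  have herror := mul_le_mul_of_nonneg_left (sum_primes_rpow_mul_log_le hB0 hα₀ hα₁ hθ hy hX)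
    (by positivity : 0 ≤ 2 * B)
  set u := Real.log (X / y ^ 2)
  set W := X * y ^ (α - 1) * u
  set V := X ^ α
  calc _ ≤ 2 * B * (W + B * (V * (2 + u))) + 2 * B * W :=
        (abs_sub_le _ _ _).trans (add_le_add (hdiff.trans herror) hmain)
    _ = 4 * (B * W) + B ^ 2 * (V * (4 + 2 * u)) := by ring
    _ ≤ 4 * (B ^ 2 * W) + B ^ 2 * (V * (4 + 4 * u)) := by
        gcongr
        exacts [le_self_pow₀ hB two_ne_zero, by norm_num]
    _ = _ := by ring

end HyperbolicTriangle

section TriangleArea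

variable {u : ℝ}

lemma triangleArea_nonneg (u : ℝ) : 0 ≤ triangleArea u := by
  linarith [Real.add_one_le_exp (-u), triangleArea.eq_1 u]

lemma exp_neg_eq_exp_neg_half_sq (u : ℝ) : Real.exp (-u) = Real.exp (-(u / 2)) ^ 2 := by
  rw [← Real.exp_nat_mul]
  congr 1
  push_cast
  ring

lemma triangleArea_half_le (u : ℝ) : triangleArea (u / 2) ≤ triangleArea u / 2 := by
  rw [triangleArea, triangleArea, exp_neg_eq_exp_neg_half_sq u]
  linarith [sq_nonneg (1 - Real.exp (-(u / 2)))]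

lemma min_le_triangleArea (u : ℝ) : min (u ^ 2 / 4) (u / 2) ≤ triangleArea u := by
  rw [triangleArea]
  rcases le_total u 2 with hu2 | hu2
  · refine (min_le_left _ _).trans ?_
    rw [exp_neg_eq_exp_neg_half_sq u]
    nlinarith [Real.add_one_le_exp (-(u / 2))]
  · refine (min_le_right _ _).trans ?_
    linarith [Real.exp_pos (-u)]

lemma mul_sq_le_triangleArea {a b : ℝ} (hb : 1 ≤ b) (ha₀ : 0 ≤ a) (ha₁ : a ≤ 1)
    (hu : 8 * b * a ≤ u) : 2 * b * a ^ 2 ≤ triangleArea u := by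
  have hba : 0 ≤ b * a := by positivity
  refine le_trans (le_min ?_ ?_) (min_le_triangleArea u)
  · calc 2 * b * a ^ 2 ≤ 2 * b * a ^ 2 * (8 * b) :=
          le_mul_of_one_le_right (by positivity) (by linarith)
      _ = (8 * b * a) ^ 2 / 4 := by ring
      _ ≤ u ^ 2 / 4 := by gcongr
  · calc 2 * b * a ^ 2 = 2 * (b * a) * a := by ring
      _ ≤ 2 * (b * a) := mul_le_of_le_one_right (by positivity) ha₁
      _ ≤ u / 2 := by linarith

lemma mul_sq_mul_le_triangleArea_add {D L a : ℝ} (hD : 1 ≤ D) (hL : 1 ≤ L) (hu : 0 ≤ u)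
    (ha₀ : 0 ≤ a) (ha₁ : a ≤ 1) :
    D * (a ^ 2 * u) ≤ u / L * triangleArea u / 2 + 8 * D ^ 2 * L * a ^ 3 := by
  rcases le_total u (8 * (D * L) * a) with hsmall | hlarge
  · have harea : 0 ≤ u / L * triangleArea u / 2 := by
      have := triangleArea_nonneg u
      positivity
    calc D * (a ^ 2 * u) ≤ D * (a ^ 2 * (8 * (D * L) * a)) := by gcongr
      _ = 8 * D ^ 2 * L * a ^ 3 := by ring
      _ ≤ _ := le_add_of_nonneg_left harea
  · have harea := mul_sq_le_triangleArea (one_le_mul_of_one_le_of_one_le hD hL) ha₀ ha₁ hlarge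
    calc D * (a ^ 2 * u) = u / L * (2 * (D * L) * a ^ 2) / 2 := by field_simp
      _ ≤ u / L * triangleArea u / 2 := by gcongr
      _ ≤ _ := le_add_of_nonneg_right (by positivity)

end TriangleArea

section CountAndLogSum

variable {X X' y : ℝ}

lemma pairLogSum_le_card_mul (hy : 0 < y) :
    pairLogSum X y ≤ (primePairs X y).card * (Real.log X ^ 2 / 4) := by
  rw [← nsmul_eq_mul]
  refine Finset.sum_le_card_nsmul _ _ _ fun pq hpq ↦ ?_
  obtain ⟨-, -, hp, hq, hX⟩ := (mem_primePairs hy).1 hpq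
  have hp0 : (0 : ℝ) < pq.1 := hy.trans hp
  have hq0 : (0 : ℝ) < pq.2 := hy.trans hq
  have hlog : Real.log pq.1 + Real.log pq.2 ≤ Real.log X := by
    rw [← Real.log_mul hp0.ne' hq0.ne']
    exact Real.log_le_log (by positivity) hX
  calc Real.log pq.1 * Real.log pq.2 ≤ (Real.log pq.1 + Real.log pq.2) ^ 2 / 4 := by
        linarith [four_mul_le_sq_add (Real.log pq.1) (Real.log pq.2)]
    _ ≤ Real.log X ^ 2 / 4 := by gcongr

lemma card_mul_le_pairLogSum (hy : 1 ≤ y) :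
    (primePairs X y).card * Real.log y ^ 2 ≤ pairLogSum X y := by
  have hy0 : 0 < y := one_pos.trans_le hy
  rw [← nsmul_eq_mul]
  refine Finset.card_nsmul_le_sum _ _ _ fun pq hpq ↦ ?_
  obtain ⟨-, -, hp, hq, -⟩ := (mem_primePairs hy0).1 hpq
  rw [sq]
  exact mul_le_mul (Real.log_le_log hy0 hp.le) (Real.log_le_log hy0 hq.le) (Real.log_nonneg hy)
    (Real.log_natCast_nonneg _)

lemma card_sub_card_mul_le_pairLogSum_sub (hy : 1 ≤ y) (hX'0 : 0 < X') (hX' : X' ≤ X) :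
    ((primePairs X y).card - (primePairs X' y).card : ℝ) *
        (Real.log y * (Real.log X' - Real.log y)) ≤
      pairLogSum X y - pairLogSum X' y := by
  have hy0 : 0 < y := one_pos.trans_le hy
  have hsub := primePairs_subset hy0 hX'
  rw [pairLogSum, pairLogSum, ← Finset.sum_sdiff hsub, add_sub_cancel_right,
    ← Nat.cast_sub (Finset.card_le_card hsub), ← Finset.card_sdiff_of_subset hsub, ← nsmul_eq_mul]
  refine Finset.card_nsmul_le_sum _ _ _ fun pq hpq ↦ ?_
  simp only [Finset.mem_sdiff, mem_primePairs hy0, not_and, not_le] at hpq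
  obtain ⟨⟨hp', hq', hp, hq, -⟩, hX'pq⟩ := hpq
  have hlog : Real.log X' ≤ Real.log pq.1 + Real.log pq.2 := by
    rw [← Real.log_mul (hy0.trans hp).ne' (hy0.trans hq).ne']
    exact Real.log_le_log hX'0 (hX'pq hp' hq' hp hq).le
  nlinarith [Real.log_nonneg hy, mul_nonneg (sub_nonneg.2 (Real.log_le_log hy0 hp.le))
    (sub_nonneg.2 (Real.log_le_log hy0 hq.le))]

end CountAndLogSum

section TriangleCount

variable {x c : ℝ}

lemma rpow_mul_add_rpow_mul_le {D : ℝ} (hD : 1 ≤ D) (hx : 1 < x) (hc₀ : 0 < c)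
    (hc : c ≤ 1 / 2) (hcx : 1 ≤ c * Real.log x) :
    D * (x ^ (1 - c / 3) * ((1 - 2 * c) * Real.log x) +
        x ^ (2 / 3 : ℝ) * (1 + (1 - 2 * c) * Real.log x)) ≤
      (1 - 2 * c) * (x * triangleArea ((1 - 2 * c) * Real.log x)) / 2 +
        (8 * D ^ 2 + 2 * D) * (c * Real.log x ^ 2 * x ^ (1 - c / 2)) := by
  have hx0 : 0 < x := one_pos.trans hx
  set L := Real.log x
  have hL0 : 0 < L := Real.log_pos hx
  have hL : 1 ≤ L := by nlinarith
  have hu : 0 ≤ (1 - 2 * c) * L := mul_nonneg (by linarith) hL0.le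
  set a := x ^ (-(c / 6)) with ha
  have hpow : ∀ n : ℕ, x * a ^ n = x ^ (1 - n * (c / 6)) := fun n ↦ by
    rw [ha, ← Real.rpow_mul_natCast hx0.le, sub_eq_add_neg, Real.rpow_add hx0, Real.rpow_one,
      neg_mul, mul_comm (c / 6)]
  have hsq : x * a ^ 2 = x ^ (1 - c / 3) := by
    rw [hpow]
    congr 1
    push_cast
    ring
  have hcube : x * a ^ 3 = x ^ (1 - c / 2) := by
    rw [hpow]
    congr 1
    push_cast
    ring
  have hfirst := mul_sq_mul_le_triangleArea_add (a := a) hD hL hu (by positivity)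
    (Real.rpow_le_one_of_one_le_of_nonpos hx.le (by linarith))
  rw [mul_div_cancel_right₀ _ hL0.ne'] at hfirst
  have hL_le : L ≤ c * L ^ 2 := by nlinarith
  have hsecond : x ^ (2 / 3 : ℝ) * (1 + (1 - 2 * c) * L) ≤
      x ^ (1 - c / 2) * (2 * (c * L ^ 2)) := by
    gcongr
    · exact hx.le
    · linarith
    · nlinarith
  rw [← hcube] at hsecond
  rw [← hsq, ← hcube]
  calc _ = x * (D * (a ^ 2 * ((1 - 2 * c) * L))) +
          D * (x ^ (2 / 3 : ℝ) * (1 + (1 - 2 * c) * L)) := by ring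
    _ ≤ x * ((1 - 2 * c) * triangleArea ((1 - 2 * c) * L) / 2 + 8 * D ^ 2 * (c * L ^ 2) * a ^ 3) +
          D * (x * a ^ 3 * (2 * (c * L ^ 2))) := by
        gcongr
        exact hfirst.trans (by gcongr)
    _ = _ := by ring

lemma abs_pairLogSum_rpow_sub_le {B d : ℝ} (hB : 1 ≤ B)
    (hθ : ∀ t : ℝ, 1 ≤ t → |Chebyshev.theta t - t| ≤ B * t ^ (2 / 3 : ℝ)) (hx : 1 < x)
    (hc₀ : 0 < c) (hcx : 1 ≤ c * Real.log x) (hcd : 2 * c ≤ d) (hd : d ≤ 1) :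
    |pairLogSum (x ^ d) (x ^ c) - x ^ d * triangleArea ((d - 2 * c) * Real.log x)| ≤
      (1 - 2 * c) * (x * triangleArea ((1 - 2 * c) * Real.log x)) / 2 +
        (8 * (4 * B ^ 2) ^ 2 + 2 * (4 * B ^ 2)) * (c * Real.log x ^ 2 * x ^ (1 - c / 2)) := by
  have hx0 : 0 < x := one_pos.trans hx
  have hL0 : 0 < Real.log x := Real.log_pos hx
  have hsq : (x ^ c) ^ 2 = x ^ (2 * c) := by
    rw [← Real.rpow_mul_natCast hx0.le, mul_comm]
    norm_cast
  have hlog : Real.log (x ^ d / (x ^ c) ^ 2) = (d - 2 * c) * Real.log x := by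
    rw [hsq, ← Real.rpow_sub hx0, Real.log_rpow hx0]
  have hsum := abs_pairLogSum_sub_mul_triangleArea_le (y := x ^ c) (X := x ^ d) hB (by norm_num)
    (by norm_num) hθ (Real.one_le_rpow hx.le hc₀.le)
    (hsq ▸ Real.rpow_le_rpow_of_exponent_le hx.le hcd)
  rw [hlog, ← Real.rpow_mul hx0.le, ← Real.rpow_mul hx0.le, ← Real.rpow_add hx0] at hsum
  refine hsum.trans (le_trans ?_
    (rpow_mul_add_rpow_mul_le (by nlinarith) hx hc₀ (by linarith) hcx))
  gcongr 4 * B ^ 2 * (x ^ ?_ * ?_ + x ^ ?_ * (1 + ?_))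
  · exact hx.le
  · linarith
  · gcongr
  · exact hx.le
  · linarith
  · gcongr

variable {C : ℝ}

lemma le_card_primePairs (hC : 0 ≤ C) (hx : 1 < x) (hc₀ : 0 < c) (hc : c ≤ 1 / 2)
    (hS : |pairLogSum x (x ^ c) - x * triangleArea ((1 - 2 * c) * Real.log x)| ≤
      (1 - 2 * c) * (x * triangleArea ((1 - 2 * c) * Real.log x)) / 2 +
        C * (c * Real.log x ^ 2 * x ^ (1 - c / 2))) :
    1 / (4 * (1 - c) ^ 2) * (4 * x / Real.log x ^ 2 * triangleArea ((1 - 2 * c) * Real.log x)) -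
        C * c⁻¹ * x ^ (1 - c / 2) ≤
      (primePairs x (x ^ c)).card := by
  have hcard := pairLogSum_le_card_mul (X := x) (y := x ^ c) (by positivity)
  have harea := triangleArea_nonneg ((1 - 2 * c) * Real.log x)
  set L := Real.log x
  have hL0 : 0 < L := Real.log_pos hx
  set A := x * triangleArea ((1 - 2 * c) * L) with hA
  set P := x ^ (1 - c / 2)
  have h1c : 0 < 1 - c := by linarith
  have hcoeff : 1 / (1 - c) ^ 2 ≤ 2 * (1 + 2 * c) := by
    rw [div_le_iff₀ (by positivity)]
    nlinarith [mul_nonneg (by linarith : 0 ≤ 1 - 2 * c) (by nlinarith : 0 ≤ 1 + 2 * c - 2 * c ^ 2)]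
  have hinv : 4 * c ≤ c⁻¹ := by
    rw [← one_div, le_div_iff₀ hc₀]
    nlinarith
  calc _ = (1 / (1 - c) ^ 2 * A - C * c⁻¹ * P * L ^ 2) / L ^ 2 := by
        rw [hA]
        field_simp
    _ ≤ (2 * (1 + 2 * c) * A - C * (4 * c) * P * L ^ 2) / L ^ 2 := by gcongr
    _ ≤ _ := by
        rw [div_le_iff₀ (by positivity)]
        linarith [(abs_le.1 hS).1]

lemma card_primePairs_mul_le (hx : 1 < x) (hc₀ : 0 < c) (hc : c ≤ 1 / 2) :
    (primePairs x (x ^ c)).card * (c * Real.log x) ^ 2 ≤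
      (1 - 2 * c) * pairLogSum (x ^ (c + 1 / 2)) (x ^ c) + 2 * c * pairLogSum x (x ^ c) := by
  have hx0 : 0 < x := one_pos.trans hx
  have hy : 1 ≤ x ^ c := Real.one_le_rpow hx.le hc₀.le
  have hX' : x ^ (c + 1 / 2) ≤ x := by
    simpa using Real.rpow_le_rpow_of_exponent_le hx.le (by linarith : c + 1 / 2 ≤ 1)
  have hnear := card_mul_le_pairLogSum (X := x ^ (c + 1 / 2)) hy
  have hfar := card_sub_card_mul_le_pairLogSum_sub hy (by positivity) hX'
  rw [Real.log_rpow hx0] at hnear hfar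
  rw [Real.log_rpow hx0] at hfar
  linear_combination hnear + 2 * c * hfar

lemma card_primePairs_le (hx : 1 < x) (hc₀ : 0 < c) (hc : c ≤ 1 / 2)
    (hS : ∀ d, 2 * c ≤ d → d ≤ 1 →
      |pairLogSum (x ^ d) (x ^ c) - x ^ d * triangleArea ((d - 2 * c) * Real.log x)| ≤
        (1 - 2 * c) * (x * triangleArea ((1 - 2 * c) * Real.log x)) / 2 +
          C * (c * Real.log x ^ 2 * x ^ (1 - c / 2))) :
    (primePairs x (x ^ c)).card ≤
      1 / (4 * c ^ 2) * (4 * x / Real.log x ^ 2 * triangleArea ((1 - 2 * c) * Real.log x)) +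
        C * c⁻¹ * x ^ (1 - c / 2) := by
  have hx0 : 0 < x := one_pos.trans hx
  have hcard := card_primePairs_mul_le hx hc₀ hc
  have hfull := (abs_le.1 (hS 1 (by linarith) le_rfl)).2
  have hhalf := (abs_le.1 (hS (c + 1 / 2) (by linarith) (by linarith))).2
  rw [Real.rpow_one] at hfull
  have harea : x ^ (c + 1 / 2) * triangleArea ((c + 1 / 2 - 2 * c) * Real.log x) ≤
      x * triangleArea ((1 - 2 * c) * Real.log x) / 2 := by
    have hu : (c + 1 / 2 - 2 * c) * Real.log x = (1 - 2 * c) * Real.log x / 2 := by ring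
    rw [hu, mul_div_assoc x]
    refine mul_le_mul ?_ (triangleArea_half_le _) (triangleArea_nonneg _) hx0.le
    simpa using Real.rpow_le_rpow_of_exponent_le hx.le (by linarith : c + 1 / 2 ≤ 1)
  set L := Real.log x
  have hL0 : 0 < L := Real.log_pos hx
  set A := x * triangleArea ((1 - 2 * c) * L) with hA
  set K := C * (c * L ^ 2 * x ^ (1 - c / 2)) with hK
  calc ((primePairs x (x ^ c)).card : ℝ) ≤ (A + K) / (c * L) ^ 2 := by
        rw [le_div_iff₀ (by positivity)]
        refine hcard.trans ?_
        have h2c : 0 ≤ 1 - 2 * c := by linarith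
        linear_combination (1 - 2 * c) * (hhalf + harea) + 2 * c * hfull
    _ = _ := by
        rw [hA, hK]
        field_simp

lemma exists_mem_Icc_abs_sub_mul_le {N m lo hi ε : ℝ} (hm : 0 ≤ m) (hlh : lo ≤ hi) (hε : 0 ≤ ε)
    (hlo : lo * m - ε ≤ N) (hhi : N ≤ hi * m + ε) : ∃ a ∈ Set.Icc lo hi, |N - a * m| ≤ ε := by
  have hle : lo * m ≤ hi * m := by gcongr
  have hclamp : max (lo * m) (min N (hi * m)) ∈ (· * m) '' Set.Icc lo hi := by
    rw [Set.image_mul_right_Icc hlh hm]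
    exact ⟨le_max_left _ _, max_le hle (min_le_right _ _)⟩
  obtain ⟨a, ha, ham⟩ := hclamp
  refine ⟨a, ha, ?_⟩
  rw [show a * m = _ from ham, abs_le]
  grind

lemma div_lt_rpow_sq {r : ℝ} (hr : 0 < r) (hx : 1 < x)
    (hrc : 1 / 2 - Real.log r / (2 * Real.log x) < c) : x / r < (x ^ c) ^ 2 := by
  have hx0 : 0 < x := one_pos.trans hx
  have hL0 : 0 < Real.log x := Real.log_pos hx
  rw [← Real.log_lt_log_iff (by positivity) (by positivity), Real.log_div hx0.ne' hr.ne',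
    Real.log_pow, Real.log_rpow hx0]
  have hlog : 1 / 2 - Real.log r / (2 * Real.log x) =
      (Real.log x - Real.log r) / (2 * Real.log x) := by field_simp
  rw [hlog, div_lt_iff₀ (by positivity)] at hrc
  push_cast
  linarith

lemma NMAX_eq_card_primePairs {r : ℝ} (hr : 0 < r) (hx : 1 < x)
    (hrc : 1 / 2 - Real.log r / (2 * Real.log x) < c) :
    NMAX r c x = (primePairs x (x ^ c)).card := by
  have hx0 : 0 < x := one_pos.trans hx
  have hy : 0 < x ^ c := by positivity
  refine Nat.subtype_card _ fun pq ↦ ?_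
  rw [mem_primePairs hy, Real.rpow_sub hx0, Real.rpow_one, le_div_iff₀ hy, le_div_iff₀ hy]
  refine ⟨fun ⟨hp', hq', hp, hq, hX⟩ ↦ ⟨hp', hq', hp, ?_, hq, ?_, ?_, hX⟩,
    fun ⟨hp', hq', hp, _, hq, _, _, hX⟩ ↦ ⟨hp', hq', hp, hq, hX⟩⟩
  · nlinarith
  · nlinarith
  · nlinarith [div_lt_rpow_sq hr hx hrc]

lemma triangleArea_mul_log (hx : 0 < x) (b : ℝ) :
    triangleArea (b * Real.log x) = b * Real.log x + x ^ (-b) - 1 := by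
  rw [triangleArea, Real.rpow_def_of_pos hx, mul_neg, mul_comm (Real.log x)]
  ring

end TriangleCount

lemma riemannZeta_ne_zero_of_one_half_lt_re (hRH : RiemannHypothesis) {s : ℂ}
    (hs : 1 / 2 < s.re) : riemannZeta s ≠ 0 := by
  intro hzero
  have hs1 : s ≠ 1 := by
    rintro rfl
    exact riemannZeta_one_ne_zero hzero
  have htrivial : ¬∃ n : ℕ, s = -2 * (n + 1) := by
    rintro ⟨n, rfl⟩
    norm_num at hs
    linarith [(n.cast_nonneg : (0 : ℝ) ≤ n)]
  exact hs.ne' (hRH s hzero htrivial hs1)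

theorem NMAX_asymptotics_triangle_general {σ : ℝ} (hσ : σ < 2 / 3)
    (hζ : ∀ s : ℂ, σ < s.re → riemannZeta s ≠ 0) :
    ∃ C : ℝ, 0 < C ∧ ∀ r x c₁ : ℝ, 0 < r → 1 < x → Real.exp 1 ≤ x ^ c₁ →
      1 / 2 - Real.log r / (2 * Real.log x) < c₁ → c₁ ≤ 1 / 2 →
      ∃ atil ∈ Set.Icc (1 / (4 * (1 - c₁) ^ 2)) (1 / (4 * c₁ ^ 2)),
        |(NMAX r c₁ x : ℝ)
            - atil * (4 * x / (Real.log x) ^ 2)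
              * ((1 - 2 * c₁) * Real.log x + x ^ (-(1 - 2 * c₁)) - 1)|
          ≤ C * c₁⁻¹ * x ^ (1 - c₁ / 2) := by
  obtain ⟨B, hB, hθ⟩ := exists_abs_theta_sub_le (le_max_right σ (1 / 2))
    (max_lt hσ (by norm_num)) (by norm_num) fun s hs ↦ hζ s ((le_max_left _ _).trans_lt hs)
  refine ⟨8 * (4 * B ^ 2) ^ 2 + 2 * (4 * B ^ 2), by positivity, fun r x c hr hx hxc hrc hc ↦ ?_⟩
  have hx0 : 0 < x := one_pos.trans hx
  have hcx : 1 ≤ c * Real.log x := by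
    rwa [← Real.log_rpow hx0, Real.le_log_iff_exp_le (by positivity)]
  have hc₀ : 0 < c := pos_of_mul_pos_left (one_pos.trans_le hcx) (Real.log_pos hx).le
  have hS : ∀ d, 2 * c ≤ d → d ≤ 1 → _ := fun d ↦ abs_pairLogSum_rpow_sub_le hB hθ hx hc₀ hcx
  have hS₁ := hS 1 (by linarith) le_rfl
  rw [Real.rpow_one] at hS₁
  have harea := triangleArea_nonneg ((1 - 2 * c) * Real.log x)
  have hle : 1 / (4 * (1 - c) ^ 2) ≤ 1 / (4 * c ^ 2) := by
    gcongr
    linarith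
  rw [NMAX_eq_card_primePairs hr hx hrc, ← triangleArea_mul_log hx0]
  simp_rw [mul_assoc _ (4 * x / _)]
  exact exists_mem_Icc_abs_sub_mul_le (by positivity) hle (by positivity)
    (le_card_primePairs (by positivity) hx hc₀ hc hS₁) (card_primePairs_le hx hc₀ hc hS)

/-- Theorem 5.2(ii) of the paper (count of the maximal notion, triangle case, under RH);
the main term is independent of `r`. -/
theorem NMAX_asymptotics_triangle (hRH : RiemannHypothesis) :
    ∃ C : ℝ, 0 < C ∧ ∀ r x c₁ : ℝ, 1 < r → 1 < x →
      (2657 : ℝ) ≤ x ^ c₁ →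
      1 / 2 - Real.log r / (2 * Real.log x) < c₁ → c₁ ≤ 1 / 2 →
      ∃ atil ∈ Set.Icc (1 / (4 * (1 - c₁) ^ 2)) (1 / (4 * c₁ ^ 2)),
        |(NMAX r c₁ x : ℝ)
            - atil * (4 * x / (Real.log x) ^ 2)
              * ((1 - 2 * c₁) * Real.log x + x ^ (-(1 - 2 * c₁)) - 1)|
          ≤ C * c₁⁻¹ * x ^ (1 - c₁ / 2) := by
  obtain ⟨C, hC, hbound⟩ := NMAX_asymptotics_triangle_general (by norm_num)
    fun s hs ↦ riemannZeta_ne_zero_of_one_half_lt_re hRH hs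
  exact ⟨C, hC, fun r x c₁ hr hx hxc ↦ hbound r x c₁ (one_pos.trans hr) hx
    (by linarith [Real.exp_one_lt_three])⟩
end

section
/- For all real r > 1 and x > 1 one has N^{FIX}_{r,1}(x) ≤ N^{DM}_r(x) ≤ N^{FIX}_{r²,1/2}(x), where N^{FIX}_{r,σ}(x) = #{(p,q) : p, q prime, √(x/r) < p ≤ √(r^σ·x), √(x/r) < q ≤ √(r^σ·x), p·q ≤ x} and N^{DM}_r(x) = #{(p,q) : p, q prime, p/r < q < r·p, x/r < p·q ≤ x}. -/
/-- Prime-pair count of the fixed-bound notion. -/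
noncomputable def NFIX (r σ x : ℝ) : ℕ :=
  Nat.card {pq : ℕ × ℕ // pq.1.Prime ∧ pq.2.Prime ∧
    Real.sqrt (x / r) < (pq.1 : ℝ) ∧ (pq.1 : ℝ) ≤ Real.sqrt (r ^ σ * x) ∧
    Real.sqrt (x / r) < (pq.2 : ℝ) ∧ (pq.2 : ℝ) ≤ Real.sqrt (r ^ σ * x) ∧
    (pq.1 : ℝ) * (pq.2 : ℝ) ≤ x}

/-- Prime-pair count of the de Weger notion. -/
noncomputable def NDM (r x : ℝ) : ℕ :=
  Nat.card {pq : ℕ × ℕ // pq.1.Prime ∧ pq.2.Prime ∧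
    (pq.1 : ℝ) / r < (pq.2 : ℝ) ∧ (pq.2 : ℝ) < r * (pq.1 : ℝ) ∧
    x / r < (pq.1 : ℝ) * (pq.2 : ℝ) ∧ (pq.1 : ℝ) * (pq.2 : ℝ) ≤ x}

/-!
Both functions count the prime points of a planar region below the hyperbola `p * q = x`, so it
suffices to compare the regions. Since `√(r * x) = r * √(x / r)`, the box of the fixed-bound notion
with `σ = 1` has endpoints of ratio `r`, so its points satisfy `p < r * q` and `q < r * p`.
Conversely, multiplying `p < r * q` by `p` gives `p ^ 2 < r * x`, and multiplying `q < r * p` by `p`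
gives `x / r < r * p ^ 2`; these are the bounds of the fixed-bound notion with parameters `r ^ 2`
and `1 / 2`.
-/

/-- The region of the plane whose prime points are counted by `NFIX r σ x`. -/
def fixedBoundRegion (r σ x : ℝ) : Set (ℝ × ℝ) :=
  {z | √(x / r) < z.1 ∧ z.1 ≤ √(r ^ σ * x) ∧ √(x / r) < z.2 ∧ z.2 ≤ √(r ^ σ * x) ∧ z.1 * z.2 ≤ x}

/-- The region of the plane whose prime points are counted by `NDM r x`. -/
def deWegerRegion (r x : ℝ) : Set (ℝ × ℝ) :=
  {z | z.1 / r < z.2 ∧ z.2 < r * z.1 ∧ x / r < z.1 * z.2 ∧ z.1 * z.2 ≤ x}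

/-- The number of ordered pairs of primes in a region of the plane. As a `Nat.card`, it is `0` when
there are infinitely many. -/
noncomputable def primePairCount (R : Set (ℝ × ℝ)) : ℕ :=
  Nat.card {pq : ℕ × ℕ // pq.1.Prime ∧ pq.2.Prime ∧ ((pq.1 : ℝ), (pq.2 : ℝ)) ∈ R}

theorem NFIX_eq_primePairCount (r σ x : ℝ) :
    NFIX r σ x = primePairCount (fixedBoundRegion r σ x) := rfl

theorem NDM_eq_primePairCount (r x : ℝ) : NDM r x = primePairCount (deWegerRegion r x) := rfl

theorem finite_pos_pairs_mul_le (x : ℝ) :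
    {mn : ℕ × ℕ | 0 < mn.1 ∧ 0 < mn.2 ∧ (mn.1 : ℝ) * mn.2 ≤ x}.Finite := by
  refine (Set.finite_Iic (⌊x⌋₊, ⌊x⌋₊)).subset ?_
  rintro ⟨m, n⟩ ⟨hm, hn, hmn⟩
  have mul_le_floor : m * n ≤ ⌊x⌋₊ := Nat.le_floor (by exact_mod_cast hmn)
  exact ⟨(Nat.le_mul_of_pos_right m hn).trans mul_le_floor,
    (Nat.le_mul_of_pos_left n hm).trans mul_le_floor⟩

theorem primePairCount_mono {R S : Set (ℝ × ℝ)} {x : ℝ} (hRS : R ⊆ S)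
    (hS : ∀ z ∈ S, z.1 * z.2 ≤ x) : primePairCount R ≤ primePairCount S := by
  have finite_primePairs :
      {pq : ℕ × ℕ | pq.1.Prime ∧ pq.2.Prime ∧ ((pq.1 : ℝ), (pq.2 : ℝ)) ∈ S}.Finite :=
    (finite_pos_pairs_mul_le x).subset fun _ ⟨hp, hq, hpq⟩ => ⟨hp.pos, hq.pos, hS _ hpq⟩
  exact Nat.card_mono finite_primePairs fun _ ⟨hp, hq, hpq⟩ => ⟨hp, hq, hRS hpq⟩

section Inequalities

variable {r x p q : ℝ}

theorem sqrt_mul_eq_mul_sqrt_div (hr : 0 ≤ r) : √(r * x) = r * √(x / r) := by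
  rcases hr.eq_or_lt with rfl | hr
  · simp
  · rw [show r * x = r ^ 2 * (x / r) by field_simp, Real.sqrt_mul (sq_nonneg r),
      Real.sqrt_sq hr.le]

theorem lt_mul_of_le_sqrt_mul_of_sqrt_div_lt (hr : 0 < r) (hp : p ≤ √(r * x))
    (hq : √(x / r) < q) : p < r * q :=
  calc
    p ≤ √(r * x) := hp
    _ = r * √(x / r) := sqrt_mul_eq_mul_sqrt_div hr.le
    _ < r * q := by gcongr

theorem lt_mul_of_sqrt_lt_of_sqrt_lt (hp : √x < p) (hq : √x < q) : x < p * q :=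
  calc
    x ≤ √x ^ 2 := (Real.sqrt_le_iff.1 le_rfl).2
    _ = √x * √x := sq _
    _ < p * q := mul_lt_mul'' hp hq (Real.sqrt_nonneg x) (Real.sqrt_nonneg x)

theorem pos_of_lt_mul_of_lt_mul (hr : 1 < r) (hpq : p < r * q) (hqp : q < r * p) : 0 < p := by
  have lt_sq_mul : p < r ^ 2 * p :=
    calc
      p < r * q := hpq
      _ < r * (r * p) := by gcongr
      _ = r ^ 2 * p := by ring
  have sub_mul_pos : 0 < (r ^ 2 - 1) * p := by linarith
  exact (pos_iff_pos_of_mul_pos sub_mul_pos).1 (sub_pos.2 (one_lt_pow₀ hr two_ne_zero))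

theorem sqrt_div_sq_lt_of_lt_mul (hr : 0 < r) (hp : 0 < p) (hqp : q < r * p)
    (hx : x / r < p * q) : √(x / r ^ 2) < p := by
  rw [Real.sqrt_lt' hp]
  calc
    x / r ^ 2 = x / r / r := by rw [div_div, sq]
    _ < p * q / r := by gcongr
    _ < p * (r * p) / r := by gcongr
    _ = p ^ 2 := by field_simp

theorem le_sqrt_mul_of_le_mul (hr : 0 ≤ r) (hp : 0 ≤ p) (hpq : p ≤ r * q) (hx : p * q ≤ x) :
    p ≤ √(r * x) := by
  apply Real.le_sqrt_of_sq_le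
  calc
    p ^ 2 = p * p := sq p
    _ ≤ p * (r * q) := by gcongr
    _ = r * (p * q) := by ring
    _ ≤ r * x := by gcongr

end Inequalities

theorem fixedBoundRegion_one_subset_deWegerRegion {r : ℝ} (hr : 0 < r) (x : ℝ) :
    fixedBoundRegion r 1 x ⊆ deWegerRegion r x := by
  rintro ⟨p, q⟩ ⟨p_gt, p_le, q_gt, q_le, hpq⟩
  rw [Real.rpow_one] at p_le q_le
  have p_lt : p < r * q := lt_mul_of_le_sqrt_mul_of_sqrt_div_lt hr p_le q_gt
  have q_lt : q < r * p := lt_mul_of_le_sqrt_mul_of_sqrt_div_lt hr q_le p_gt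
  exact ⟨(div_lt_iff₀' hr).2 p_lt, q_lt, lt_mul_of_sqrt_lt_of_sqrt_lt p_gt q_gt, hpq⟩

theorem deWegerRegion_subset_fixedBoundRegion_sq_half {r : ℝ} (hr : 1 < r) (x : ℝ) :
    deWegerRegion r x ⊆ fixedBoundRegion (r ^ 2) (1 / 2) x := by
  rintro ⟨p, q⟩ ⟨p_div_lt, q_lt, mul_gt, mul_le⟩
  have r_pos : 0 < r := one_pos.trans hr
  have p_lt : p < r * q := (div_lt_iff₀' r_pos).1 p_div_lt
  have p_pos : 0 < p := pos_of_lt_mul_of_lt_mul hr p_lt q_lt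
  have q_pos : 0 < q := pos_of_lt_mul_of_lt_mul hr q_lt p_lt
  have rpow_half : (r ^ 2) ^ (1 / 2 : ℝ) = r := by rw [← Real.sqrt_eq_rpow, Real.sqrt_sq r_pos.le]
  rw [fixedBoundRegion, rpow_half]
  exact ⟨sqrt_div_sq_lt_of_lt_mul r_pos p_pos q_lt mul_gt,
    le_sqrt_mul_of_le_mul r_pos.le p_pos.le p_lt.le mul_le,
    sqrt_div_sq_lt_of_lt_mul r_pos q_pos p_lt (by rwa [mul_comm]),
    le_sqrt_mul_of_le_mul r_pos.le q_pos.le q_lt.le (by rwa [mul_comm]), mul_le⟩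

/-- Lemma 6.3 of the paper: a tighter enclosure of the de Weger notion by fixed-bound notions. -/
theorem NDM_enclosed_by_NFIX (r x : ℝ) (hr : 1 < r) (hx : 1 < x) :
    NFIX r 1 x ≤ NDM r x ∧ NDM r x ≤ NFIX (r ^ 2) (1 / 2) x := by
  simp only [NFIX_eq_primePairCount, NDM_eq_primePairCount]
  constructor
  · exact primePairCount_mono (fixedBoundRegion_one_subset_deWegerRegion (one_pos.trans hr) x)
      fun _ ⟨_, _, _, mul_le⟩ => mul_le
  · exact primePairCount_mono (deWegerRegion_subset_fixedBoundRegion_sq_half hr x)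
      fun _ ⟨_, _, _, _, mul_le⟩ => mul_le
end
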